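/- arXiv:1107.5552 — 2 statements merged into one kernel-verified Lean document; each statement's English description precedes it below -/
import Mathlib

section
/- Let G=(V,D,B) be an acyclic mixed graph with mixed components G_1,…,G_k. Then: (i) G is rationally identifiable if and only if all of G_1,…,G_k are rationally identifiable, and G is generically identifiable if and only if all of G_1,…,G_k are generically identifiable; (ii) φ_G is generically infinite-to-one if and only if φ_{G_j} is generically infinite-to-one for some j; (iii) if, for each j, the complex parametrization φ_{G_j,ℂ} is generically h_j-to-one with h_j<∞, then φ_{G,ℂ} is generically h-to-one with h=∏_{j=1}^k h_j. -/
open scoped Classical Matrix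

/-- A mixed graph `G = (V, D, B)`: a finite vertex set `V`, a set `D` of directed
edges, and a symmetric set `B` of bidirected edges; no self-loops. -/
structure MixedGraph (V : Type*) [Fintype V] [DecidableEq V] where
  D : Finset (V × V)
  B : Finset (V × V)
  B_symm : ∀ v w : V, (v, w) ∈ B → (w, v) ∈ B
  D_irrefl : ∀ v : V, (v, v) ∉ D
  B_irrefl : ∀ v : V, (v, v) ∉ B

namespace MixedGraph

variable {V : Type*} [Fintype V] [DecidableEq V]

/-- The parents of `v`: nodes `w` with `w → v ∈ D`. -/
def pa (G : MixedGraph V) (v : V) : Finset V :=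
  Finset.univ.filter fun w => (w, v) ∈ G.D

/-- The siblings of `v`: nodes `w` with `w ↔ v ∈ B`. -/
def sib (G : MixedGraph V) (v : V) : Finset V :=
  Finset.univ.filter fun w => (w, v) ∈ G.B

/-- A trek: a walk with no colliding arrowheads.  The field `left` lists the nodes of the
left-hand side from top (head) to source (last); `right` lists the nodes of the right-hand
side from top (head) to target (last); consecutive nodes in each list are joined by directed
edges pointing away from the head.  If `hasBidir` then the two heads are joined by a
bidirected edge, otherwise they coincide (the top node). -/
structure Trek (G : MixedGraph V) where
  left : List V
  right : List V
  left_ne : left ≠ []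
  right_ne : right ≠ []
  hasBidir : Bool
  left_chain : left.Chain' fun a b => (a, b) ∈ G.D
  right_chain : right.Chain' fun a b => (a, b) ∈ G.D
  head_cond : if hasBidir then (left.head left_ne, right.head right_ne) ∈ G.B
              else left.head left_ne = right.head right_ne

namespace Trek

variable {G : MixedGraph V}

/-- The source of a trek. -/
def source (π : G.Trek) : V := π.left.getLast π.left_ne

/-- The target of a trek. -/
def target (π : G.Trek) : V := π.right.getLast π.right_ne

/-- The left-hand side `Left(π)` of a trek, as a set of nodes. -/
def leftSet (π : G.Trek) : Finset V := π.left.toFinset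

/-- The right-hand side `Right(π)` of a trek, as a set of nodes. -/
def rightSet (π : G.Trek) : Finset V := π.right.toFinset

/-- A half-trek is a trek whose left-hand side consists of exactly one node. -/
def IsHalfTrek (π : G.Trek) : Prop := π.leftSet.card = 1

/-- The number of directed edges traversed by the trek. -/
def nEdges (π : G.Trek) : ℕ := (π.left.length - 1) + (π.right.length - 1)

end Trek

/-- `htr v`: the set of nodes `w ∉ {v} ∪ sib(v)` reachable from `v` by a half-trek
containing at least one directed edge. -/
def htr (G : MixedGraph V) (v : V) : Set V :=
  {w | w ≠ v ∧ w ∉ G.sib v ∧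
    ∃ π : G.Trek, π.source = v ∧ π.target = w ∧ π.IsHalfTrek ∧ 1 ≤ π.nEdges}

/-- `f` encodes a system of treks from `Y` to `P`: treks with pairwise distinct sources
forming `Y` and pairwise distinct targets forming `P`. -/
def IsTrekSystem (G : MixedGraph V) (Y P : Finset V) (f : V → G.Trek) : Prop :=
  (∀ y ∈ Y, (f y).source = y) ∧
  (Y.image fun y => (f y).target) = P ∧
  ∀ y ∈ Y, ∀ y' ∈ Y, y ≠ y' → (f y).target ≠ (f y').target

/-- The treks `f y`, `y ∈ Y`, have no sided intersection. -/
def NoSidedIntersection (G : MixedGraph V) (Y : Finset V) (f : V → G.Trek) : Prop :=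
  ∀ y ∈ Y, ∀ y' ∈ Y, y ≠ y' →
    Disjoint (f y).leftSet (f y').leftSet ∧ Disjoint (f y).rightSet (f y').rightSet

/-- `Y` satisfies the half-trek criterion with respect to `v`. -/
def SatisfiesHTC (G : MixedGraph V) (v : V) (Y : Finset V) : Prop :=
  Y.card = (G.pa v).card ∧
  (∀ y ∈ Y, y ≠ v ∧ y ∉ G.sib v) ∧
  ∃ f : V → G.Trek, (∀ y ∈ Y, (f y).IsHalfTrek) ∧
    G.IsTrekSystem Y (G.pa v) f ∧ G.NoSidedIntersection Y f

/-- `Y` satisfies the weak half-trek criterion with respect to `v`. -/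
def SatisfiesWeakHTC (G : MixedGraph V) (v : V) (Y : Finset V) : Prop :=
  Y.card = (G.pa v).card ∧
  (∀ y ∈ Y, y ≠ v ∧ y ∉ G.sib v) ∧
  ∃ f : V → G.Trek, (∀ y ∈ Y, y ∈ G.htr v → (f y).IsHalfTrek) ∧
    G.IsTrekSystem Y (G.pa v) f ∧ G.NoSidedIntersection Y f

/-- `G` is HTC-identifiable. -/
def HTCIdentifiable (G : MixedGraph V) : Prop :=
  ∃ Y : V → Finset V,
    (∀ v, G.SatisfiesHTC v (Y v)) ∧
    ∃ r : V → V → Prop, IsStrictTotalOrder V r ∧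
      ∀ v w, w ∈ Y v → w ∈ G.htr v → r w v

/-- `G` is HTC-infinite-to-one. -/
def HTCInfiniteToOne (G : MixedGraph V) : Prop :=
  ∀ Y : V → Finset V,
    (∃ v, ¬ G.SatisfiesHTC v (Y v)) ∨ ∃ v w, v ∈ Y w ∧ w ∈ Y v

/-- `G` is acyclic: no directed cycle can be formed from the edges in `D`. -/
def Acyclic (G : MixedGraph V) : Prop :=
  ∀ v : V, ¬ Relation.TransGen (fun a b => (a, b) ∈ G.D) v v

/-- `G` is simple: at most one edge between any pair of nodes. -/
def Simple (G : MixedGraph V) : Prop :=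
  (∀ e ∈ G.D, e ∉ G.B) ∧ ∀ v w : V, (v, w) ∈ G.D → (w, v) ∉ G.D

/-- `ℝ^D_reg`: real matrices supported on `D` with `I - Λ` invertible. -/
def RDreg (G : MixedGraph V) : Set (Matrix V V ℝ) :=
  {Λ | (∀ v w, (v, w) ∉ G.D → Λ v w = 0) ∧ IsUnit (1 - Λ).det}

/-- `PD(B)`: positive definite symmetric matrices supported on the diagonal and `B`. -/
def PDB (G : MixedGraph V) : Set (Matrix V V ℝ) :=
  {Ω | Ω.PosDef ∧ ∀ v w, v ≠ w → (v, w) ∉ G.B → Ω v w = 0}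

/-- The parameter space `Θ = ℝ^D_reg × PD(B)`. -/
def Theta (G : MixedGraph V) : Set (Matrix V V ℝ × Matrix V V ℝ) :=
  {θ | θ.1 ∈ G.RDreg ∧ θ.2 ∈ G.PDB}

/-- The parametrization `φ(Λ, Ω) = (I-Λ)^{-T} Ω (I-Λ)^{-1}`. -/
noncomputable def phi {R : Type*} [CommRing R] (Λ Ω : Matrix V V R) : Matrix V V R :=
  ((1 - Λ)⁻¹)ᵀ * Ω * (1 - Λ)⁻¹

/-- Evaluation of a polynomial in the coordinates `λ_vw` (left summand) and `ω_vw`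
(right summand) at a parameter point `θ = (Λ, Ω)`. -/
noncomputable def evalParam (θ : Matrix V V ℝ × Matrix V V ℝ)
    (p : MvPolynomial ((V × V) ⊕ (V × V)) ℝ) : ℝ :=
  MvPolynomial.eval (Sum.elim (fun e => θ.1 e.1 e.2) (fun e => θ.2 e.1 e.2)) p

/-- `V₀` is a proper algebraic subset of `Θ`: the intersection with `Θ` of the zero set of a
polynomial in the coordinates that does not vanish identically on `Θ`. -/
def IsProperAlgebraic (G : MixedGraph V)
    (V₀ : Set (Matrix V V ℝ × Matrix V V ℝ)) : Prop :=
  ∃ p : MvPolynomial ((V × V) ⊕ (V × V)) ℝ,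
    (∃ θ ∈ G.Theta, evalParam θ p ≠ 0) ∧
    V₀ = {θ ∈ G.Theta | evalParam θ p = 0}

/-- Evaluation of a polynomial in the entries of a covariance matrix. -/
noncomputable def evalAtCov (S : Matrix V V ℝ) (p : MvPolynomial (V × V) ℝ) : ℝ :=
  MvPolynomial.eval (fun e => S e.1 e.2) p

/-- `G` is rationally identifiable: some rational map `ψ` (each coordinate a quotient of
polynomials in the entries of the covariance matrix) satisfies `ψ ∘ φ_G = id` off a proper
algebraic subset of `Θ`. -/
def RationallyIdentifiable (G : MixedGraph V) : Prop :=
  ∃ V₀, G.IsProperAlgebraic V₀ ∧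
    ∃ p q : ((V × V) ⊕ (V × V)) → MvPolynomial (V × V) ℝ,
      ∀ θ ∈ G.Theta \ V₀,
        (∀ i, evalAtCov (phi θ.1 θ.2) (q i) ≠ 0) ∧
        (∀ v w : V, θ.1 v w * evalAtCov (phi θ.1 θ.2) (q (Sum.inl (v, w)))
            = evalAtCov (phi θ.1 θ.2) (p (Sum.inl (v, w)))) ∧
        (∀ v w : V, θ.2 v w * evalAtCov (phi θ.1 θ.2) (q (Sum.inr (v, w)))
            = evalAtCov (phi θ.1 θ.2) (p (Sum.inr (v, w))))

/-- `G` is generically identifiable: `φ_G` is injective off a proper algebraic subset. -/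
def GenericallyIdentifiable (G : MixedGraph V) : Prop :=
  ∃ V₀, G.IsProperAlgebraic V₀ ∧
    Set.InjOn (fun θ : Matrix V V ℝ × Matrix V V ℝ => phi θ.1 θ.2) (G.Theta \ V₀)

/-- `φ_G` is generically infinite-to-one. -/
def GenInfiniteToOne (G : MixedGraph V) : Prop :=
  ∃ V₀, G.IsProperAlgebraic V₀ ∧
    ∀ θ ∈ G.Theta \ V₀,
      {θ' ∈ G.Theta | phi θ'.1 θ'.2 = phi θ.1 θ.2}.Infinite

end MixedGraph

namespace MixedGraph

variable {V : Type*} [Fintype V] [DecidableEq V]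

/-- Connectivity in the bidirected part `(V, B)`. -/
def bidirConn (G : MixedGraph V) : V → V → Prop :=
  Relation.ReflTransGen fun a b => (a, b) ∈ G.B

/-- The vertex set of the connected component of `c` in the bidirected part. -/
noncomputable def comp (G : MixedGraph V) (c : V) : Finset V :=
  Finset.univ.filter fun w => G.bidirConn c w

/-- `V_j = C_j ∪ ⋃_{v ∈ C_j} pa(v)`. -/
noncomputable def compV (G : MixedGraph V) (c : V) : Finset V :=
  G.comp c ∪ (G.comp c).biUnion fun v => G.pa v

/-- The mixed component of `G` containing `c`: the mixed graph on `V_j` with directed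
edges `D_j = {v → w ∈ D : v ∈ V_j, w ∈ C_j}` and bidirected edges `B_j = B ∩ (C_j × C_j)`. -/
noncomputable def component (G : MixedGraph V) (c : V) :
    MixedGraph {x : V // x ∈ G.compV c} where
  D := Finset.univ.filter fun e : {x : V // x ∈ G.compV c} × {x : V // x ∈ G.compV c} =>
        ((e.1 : V), (e.2 : V)) ∈ G.D ∧ (e.2 : V) ∈ G.comp c
  B := Finset.univ.filter fun e : {x : V // x ∈ G.compV c} × {x : V // x ∈ G.compV c} =>
        ((e.1 : V), (e.2 : V)) ∈ G.B ∧ (e.1 : V) ∈ G.comp c ∧ (e.2 : V) ∈ G.comp c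
  B_symm := by
    intro v w h
    simp only [Finset.mem_filter, Finset.mem_univ, true_and] at h ⊢
    exact ⟨G.B_symm _ _ h.1, h.2.2, h.2.1⟩
  D_irrefl := by
    intro v h
    simp only [Finset.mem_filter, Finset.mem_univ, true_and] at h
    exact G.D_irrefl _ h.1
  B_irrefl := by
    intro v h
    simp only [Finset.mem_filter, Finset.mem_univ, true_and] at h
    exact G.B_irrefl _ h.1

end MixedGraph

namespace MixedGraph

variable {V : Type*} [Fintype V] [DecidableEq V]

/-- The complex parameter space `ℂ^D_reg × ℂ^B_sym`. -/
def ThetaC (G : MixedGraph V) : Set (Matrix V V ℂ × Matrix V V ℂ) :=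
  {θ | ((∀ v w, (v, w) ∉ G.D → θ.1 v w = 0) ∧ IsUnit (1 - θ.1).det) ∧
       (θ.2.IsSymm ∧ ∀ v w, v ≠ w → (v, w) ∉ G.B → θ.2 v w = 0)}

/-- Evaluation of a complex polynomial in the coordinates at a parameter point. -/
noncomputable def evalParamC (θ : Matrix V V ℂ × Matrix V V ℂ)
    (p : MvPolynomial ((V × V) ⊕ (V × V)) ℂ) : ℂ :=
  MvPolynomial.eval (Sum.elim (fun e => θ.1 e.1 e.2) (fun e => θ.2 e.1 e.2)) p

/-- The complex parametrization `φ_{G,ℂ}` is generically `h`-to-one, for finite `h`. -/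
def GenHToOneC (G : MixedGraph V) (h : ℕ) : Prop :=
  ∃ p : MvPolynomial ((V × V) ⊕ (V × V)) ℂ,
    (∃ θ ∈ G.ThetaC, evalParamC θ p ≠ 0) ∧
    ∀ θ ∈ G.ThetaC, evalParamC θ p ≠ 0 →
      {θ' ∈ G.ThetaC | phi θ'.1 θ'.2 = phi θ.1 θ.2}.Finite ∧
      Nat.card {θ' ∈ G.ThetaC | phi θ'.1 θ'.2 = phi θ.1 θ.2} = h

end MixedGraph

/-!
Order the vertices topologically. The matrix `Ω` has a unique unit upper triangular `X` with `Ω X`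
lower triangular, and `I - Λ` is unit upper triangular as well, so `Σ = φ(Λ, Ω)` has triangularizing
factor `(I - Λ) X` and the same pivots as `Ω`; these two pieces of data are equivalent to `Σ`. Since
`Ω` is block diagonal along the bidirected components, so is `X`, and column `v` of `(I - Λ) X` only
involves the mixed component of `v`. Hence `φ_G` is equivalent to the collection of the `φ_{G_j}`,
up to the variances of the vertices of `V_j` outside `C_j`, which are isolated in `G_j`.

The equivalence is stated for parameters over an arbitrary commutative ring, as membership of
covariance entries in a subalgebra `B` closed under inverses (`IsLocalHom B.val`). For parameters
over a ring of functions, taking for `B` the functions that agree at two points yields the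
decomposition of fibers, and taking for `B` the rational functions of the entries of `Σ` yields the
decomposition of rational inverses.

Symmetric matrices with a vanishing leading minor, which occur in the complex parameter space, are
removed together with a proper algebraic subset. This does not change the remaining fibers, because
`Ω` and `φ(Λ, Ω)` have the same pivots.
-/

open Matrix

section Triangular

variable {V α R S : Type*} [LinearOrder α] [CommRing R] [CommRing S]

theorem blockTriangular_mul_apply_self [Fintype V] {b : V → α} (hb : Function.Injective b)
    {M N : Matrix V V R} (hM : M.BlockTriangular b) (hN : N.BlockTriangular b) (v : V) :
    (M * N) v v = M v v * N v v := by
  rw [Matrix.mul_apply]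
  refine Finset.sum_eq_single_of_mem v (Finset.mem_univ v) fun w _ hw => ?_
  rcases (hb.ne hw).lt_or_gt with h | h
  · rw [hM h, zero_mul]
  · rw [hN h, mul_zero]

theorem det_of_blockTriangular_injective [Fintype V] [DecidableEq V] {b : V → α}
    (hb : Function.Injective b) {M : Matrix V V R} (hM : M.BlockTriangular b) :
    M.det = ∏ v, M v v := by
  rw [hM.det, Finset.prod_image hb.injOn]
  refine Finset.prod_congr rfl fun v _ => ?_
  have : Subsingleton {w // b w = b v} :=
    subsingleton_of_forall_eq ⟨v, rfl⟩ fun w => Subtype.ext (hb w.2)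
  exact det_eq_elem_of_subsingleton _ (⟨v, rfl⟩ : {w // b w = b v})

variable (f : V ↪ α)

/-- `X` is unit upper triangular once the index set is ordered along `f`. -/
structure IsUnitUpperTriangular (X : Matrix V V R) : Prop where
  blockTriangular : X.BlockTriangular f
  apply_self : ∀ v, X v v = 1

/-- `X` is the upper factor of a factorization `M * X = L` with `L` lower triangular along `f` and
with invertible diagonal. The diagonal entries `(M * X) v v` are called the pivots of `M`. -/
structure Triangularizes [Fintype V] (M X : Matrix V V R) : Prop where
  isUnitUpperTriangular : IsUnitUpperTriangular f X
  mul_blockTriangular : (M * X).BlockTriangular (OrderDual.toDual ∘ f)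
  isUnit_pivot : ∀ v, IsUnit ((M * X) v v)

/-- The principal minor of `M` on the initial segment of `f` ending in `v`. -/
def leadingMinor [Fintype V] [DecidableEq V] (M : Matrix V V R) (v : V) : R :=
  (M.toSquareBlockProp fun u => f u ≤ f v).det

variable {f}

theorem leadingMinor_map [Fintype V] [DecidableEq V] (g : R →+* S) (M : Matrix V V R) (v : V) :
    leadingMinor f (M.map g) v = g (leadingMinor f M v) :=
  (g.map_det _).symm

namespace IsUnitUpperTriangular

variable {X Y : Matrix V V R}

protected theorem one [DecidableEq V] : IsUnitUpperTriangular f (1 : Matrix V V R) :=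
  ⟨blockTriangular_one, one_apply_eq⟩

theorem det_eq_one [Fintype V] [DecidableEq V] (hX : IsUnitUpperTriangular f X) : X.det = 1 := by
  rw [det_of_blockTriangular_injective f.injective hX.blockTriangular]
  exact Finset.prod_eq_one fun v _ => hX.apply_self v

theorem isUnit_det [Fintype V] [DecidableEq V] (hX : IsUnitUpperTriangular f X) : IsUnit X.det :=
  hX.det_eq_one ▸ isUnit_one

protected theorem mul [Fintype V] (hX : IsUnitUpperTriangular f X)
    (hY : IsUnitUpperTriangular f Y) : IsUnitUpperTriangular f (X * Y) where
  blockTriangular := hX.blockTriangular.mul hY.blockTriangular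
  apply_self v := by
    rw [blockTriangular_mul_apply_self f.injective hX.blockTriangular hY.blockTriangular,
      hX.apply_self, hY.apply_self, one_mul]

protected theorem inv [Fintype V] [DecidableEq V] (hX : IsUnitUpperTriangular f X) :
    IsUnitUpperTriangular f X⁻¹ := by
  have := invertibleOfIsUnitDet X hX.isUnit_det
  have hinv := blockTriangular_inv_of_blockTriangular hX.blockTriangular
  refine ⟨hinv, fun v => ?_⟩
  have hv := blockTriangular_mul_apply_self f.injective hX.blockTriangular hinv v
  rwa [mul_nonsing_inv _ hX.isUnit_det, one_apply_eq, hX.apply_self, one_mul, eq_comm] at hv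

theorem eq_one [DecidableEq V] (hX : IsUnitUpperTriangular f X)
    (hlow : X.BlockTriangular (OrderDual.toDual ∘ f)) : X = 1 := by
  ext u v
  rcases lt_trichotomy (f u) (f v) with h | h | h
  · rw [hlow h, one_apply_ne (ne_of_apply_ne f h.ne)]
  · rw [f.injective h, hX.apply_self, one_apply_eq]
  · rw [hX.blockTriangular h, one_apply_ne (ne_of_apply_ne f h.ne')]

theorem map (hX : IsUnitUpperTriangular f X) (g : R →+* S) :
    IsUnitUpperTriangular f (X.map g) where
  blockTriangular := hX.blockTriangular.map g
  apply_self v := by rw [Matrix.map_apply, hX.apply_self, map_one]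

end IsUnitUpperTriangular

namespace Triangularizes

variable [Fintype V] {M X Y : Matrix V V R}

theorem isUnit_det_mul [DecidableEq V] (h : Triangularizes f M X) : IsUnit (M * X).det := by
  rw [det_of_blockTriangular_injective (OrderDual.toDual.injective.comp f.injective)
    h.mul_blockTriangular]
  exact (IsUnit.prod_univ_iff).2 h.isUnit_pivot

theorem unique (hX : Triangularizes f M X) (hY : Triangularizes f M Y) : X = Y := by
  have := invertibleOfIsUnitDet _ hX.isUnit_det_mul
  have hXdet := hX.isUnitUpperTriangular.isUnit_det
  have hquot : X⁻¹ * Y = (M * X)⁻¹ * (M * Y) := by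
    have hMY : M * Y = M * X * (X⁻¹ * Y) := by
      rw [Matrix.mul_assoc, mul_nonsing_inv_cancel_left _ _ hXdet]
    rw [hMY, nonsing_inv_mul_cancel_left _ _ hX.isUnit_det_mul]
  have hone : X⁻¹ * Y = 1 :=
    (hX.isUnitUpperTriangular.inv.mul hY.isUnitUpperTriangular).eq_one <|
      hquot ▸ (blockTriangular_inv_of_blockTriangular hX.mul_blockTriangular).mul
        hY.mul_blockTriangular
  rw [← mul_nonsing_inv_cancel_left _ Y hXdet, hone, Matrix.mul_one]

theorem map (h : Triangularizes f M X) (g : R →+* S) :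
    Triangularizes f (M.map g) (X.map g) where
  isUnitUpperTriangular := h.isUnitUpperTriangular.map g
  mul_blockTriangular := by
    rw [← Matrix.map_mul]
    exact h.mul_blockTriangular.map g
  isUnit_pivot v := by
    rw [← Matrix.map_mul]
    exact (h.isUnit_pivot v).map g

theorem transpose_mul_mul_eq_diagonal [DecidableEq V] (h : Triangularizes f M X) (hM : M.IsSymm) :
    Xᵀ * M * X = diagonal fun v => (M * X) v v := by
  have hsymm : (Xᵀ * M * X)ᵀ = Xᵀ * M * X := by
    simp only [transpose_mul, transpose_transpose, hM.eq, Matrix.mul_assoc]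
  have hlow : (Xᵀ * M * X).BlockTriangular (OrderDual.toDual ∘ f) := by
    rw [Matrix.mul_assoc]
    exact h.isUnitUpperTriangular.blockTriangular.transpose.mul h.mul_blockTriangular
  ext u v
  rcases lt_trichotomy (f u) (f v) with huv | huv | huv
  · rw [hlow huv, diagonal_apply_ne _ (ne_of_apply_ne f huv.ne)]
  · rw [f.injective huv, diagonal_apply_eq, Matrix.mul_assoc, blockTriangular_mul_apply_self
      (OrderDual.toDual.injective.comp f.injective)
      h.isUnitUpperTriangular.blockTriangular.transpose h.mul_blockTriangular,
      transpose_apply, h.isUnitUpperTriangular.apply_self, one_mul]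
  · rw [← hsymm, transpose_apply, hlow huv, diagonal_apply_ne _ (ne_of_apply_ne f huv.ne')]

theorem eq_inv_mul_diagonal_mul_inv [DecidableEq V] (h : Triangularizes f M X) (hM : M.IsSymm) :
    M = X⁻¹ᵀ * diagonal (fun v => (M * X) v v) * X⁻¹ := by
  have hX := h.isUnitUpperTriangular.isUnit_det
  rw [← h.transpose_mul_mul_eq_diagonal hM, Matrix.mul_assoc,
    mul_nonsing_inv_cancel_right _ _ hX, ← Matrix.mul_assoc, ← transpose_mul,
    mul_nonsing_inv _ hX, transpose_one, Matrix.one_mul]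

theorem apply_eq_zero_of_ne (h : Triangularizes f M X) {γ : Type*} {χ : V → γ}
    (hM : ∀ u v, χ u ≠ χ v → M u v = 0) {u v : V} (huv : χ u ≠ χ v) : X u v = 0 := by
  -- Deleting the off-block entries of `X` gives a second triangularizing factor.
  let Y : Matrix V V R := .of fun u v => if χ u = χ v then X u v else 0
  have hmul (u v : V) : (M * Y) u v = if χ u = χ v then (M * X) u v else 0 := by
    simp only [Matrix.mul_apply]
    split_ifs with huv
    · refine Finset.sum_congr rfl fun w _ => ?_
      by_cases hw : χ w = χ v
      · simp only [Y, of_apply, if_pos hw]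
      · rw [hM u w (huv ▸ Ne.symm hw), zero_mul, zero_mul]
    · refine Finset.sum_eq_zero fun w _ => ?_
      by_cases hw : χ w = χ v
      · rw [hM u w (hw ▸ huv), zero_mul]
      · simp only [Y, of_apply, if_neg hw, mul_zero]
  have hY : Triangularizes f M Y := by
    refine ⟨⟨fun u v huv => ?_, fun v => ?_⟩, fun u v huv => ?_, fun v => ?_⟩
    · simp only [Y, of_apply, h.isUnitUpperTriangular.blockTriangular huv, ite_self]
    · simp only [Y, of_apply, if_true, h.isUnitUpperTriangular.apply_self]
    · rw [hmul, h.mul_blockTriangular huv, ite_self]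
    · simpa only [hmul, if_true] using h.isUnit_pivot v
  rw [h.unique hY]
  exact if_neg huv

theorem isUnit_leadingMinor [DecidableEq V] (h : Triangularizes f M X) (v : V) :
    IsUnit (leadingMinor f M v) := by
  let p : V → Prop := fun u => f u ≤ f v
  let fp : {u // p u} ↪ α := (Function.Embedding.subtype p).trans f
  have hzero : X.toBlock (fun u => ¬ p u) p = 0 := by
    ext u w
    exact h.isUnitUpperTriangular.blockTriangular (w.2.trans_lt (not_le.1 u.2))
  have hmul : (M * X).toSquareBlockProp p = M.toSquareBlockProp p * X.toSquareBlockProp p := by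
    have := toBlock_mul_eq_add p p p M X
    rwa [hzero, Matrix.mul_zero, add_zero] at this
  have hlow : ((M * X).toSquareBlockProp p).BlockTriangular (OrderDual.toDual ∘ fp) :=
    h.mul_blockTriangular.submatrix
  refine isUnit_of_mul_isUnit_left (y := (X.toSquareBlockProp p).det) ?_
  rw [leadingMinor, ← det_mul, ← hmul, det_of_blockTriangular_injective
    (OrderDual.toDual.injective.comp fp.injective) hlow]
  exact IsUnit.prod_univ_iff.2 fun u => h.isUnit_pivot u

end Triangularizes

variable [Fintype V] {M : Matrix V V R}

theorem exists_triangularizes_of_isUnit_leadingMinor [DecidableEq V]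
    (hM : ∀ v, IsUnit (leadingMinor f M v)) :
    ∃ X, Triangularizes f M X := by
  -- Column `v` of `Y` solves `M * y = e_v` on the initial segment ending in `v`.
  let Y : Matrix V V R := .of fun u v =>
    if h : f u ≤ f v then (M.toSquareBlockProp (f · ≤ f v))⁻¹ ⟨u, h⟩ ⟨v, le_rfl⟩ else 0
  have hmul {u v : V} (huv : f u ≤ f v) : (M * Y) u v = (1 : Matrix V V R) u v := by
    have hinv := congr_fun₂ (mul_nonsing_inv _ (hM v)) ⟨u, huv⟩ ⟨v, le_rfl⟩
    simp only [one_apply, Subtype.mk.injEq] at hinv ⊢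
    have hout : ∑ w : {w // ¬ f w ≤ f v}, M u w * Y w v = 0 :=
      Fintype.sum_eq_zero _ fun w => by simp only [Y, of_apply, dif_neg w.2, mul_zero]
    rw [← hinv, Matrix.mul_apply, Matrix.mul_apply,
      ← Fintype.sum_subtype_add_sum_subtype (f · ≤ f v), hout, add_zero]
    exact Fintype.sum_congr _ _ fun w => by
      simp only [Y, of_apply, dif_pos w.2, toSquareBlockProp_def]
  have hMY : (M * Y).BlockTriangular (OrderDual.toDual ∘ f) := fun u v huv => by
    rw [hmul (le_of_lt huv), one_apply_ne (ne_of_apply_ne f (ne_of_lt huv))]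
  have hY : Y.BlockTriangular f := fun u v huv => dif_neg huv.not_ge
  have hdet : M.det * ∏ v, Y v v = 1 := by
    rw [← det_of_blockTriangular_injective f.injective hY, ← det_mul,
      det_of_blockTriangular_injective (OrderDual.toDual.injective.comp f.injective) hMY]
    exact Finset.prod_eq_one fun v _ => by rw [hmul le_rfl, one_apply_eq]
  have hunit : ∀ v, IsUnit (Y v v) := IsUnit.prod_univ_iff.1 (IsUnit.of_mul_eq_one_right _ hdet)
  refine ⟨Y * diagonal fun v => Ring.inverse (Y v v),
    ⟨hY.mul (blockTriangular_diagonal _), fun v => ?_⟩, ?_, fun v => ?_⟩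
  · rw [mul_diagonal, Ring.mul_inverse_cancel _ (hunit v)]
  · exact Matrix.mul_assoc M Y _ ▸ hMY.mul (blockTriangular_diagonal _)
  · rw [← Matrix.mul_assoc, mul_diagonal, hmul le_rfl, one_apply_eq, one_mul]
    exact (hunit v).ringInverse

theorem exists_triangularizes_iff [DecidableEq V] :
    (∃ X, Triangularizes f M X) ↔ ∀ v, IsUnit (leadingMinor f M v) :=
  ⟨fun ⟨_, h⟩ => h.isUnit_leadingMinor, exists_triangularizes_of_isUnit_leadingMinor⟩

end Triangular

section InverseClosed

variable {K A : Type*} [CommRing K] [CommRing A] [Algebra K A] {B C : Subalgebra K A}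

theorem isLocalHom_val_iff :
    IsLocalHom B.val ↔ ∀ a b, a ∈ B → a * b = 1 → b ∈ B := by
  refine ⟨fun _ a b ha hab => ?_, fun h => ⟨fun a ha => ?_⟩⟩
  · obtain ⟨c, hc⟩ := (IsUnit.of_map B.val ⟨a, ha⟩ (.of_mul_eq_one b hab)).exists_right_inv
    rw [left_inv_eq_right_inv ((mul_comm b a).trans hab) (congrArg B.val hc)]
    exact c.2
  · obtain ⟨b, hab⟩ := ha.exists_right_inv
    exact .of_mul_eq_one ⟨b, h a b a.2 hab⟩ (Subtype.ext hab)

theorem isLocalHom_val_equalizer {C : Type*} [CommRing C] [Algebra K C] (g h : A →ₐ[K] C) :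
    IsLocalHom (AlgHom.equalizer g h).val :=
  isLocalHom_val_iff.2 fun a b (ha : g a = h a) hab => by
    have hunit : IsUnit (g a) := (IsUnit.of_mul_eq_one b hab).map g
    refine hunit.mul_left_cancel ?_
    rw [← map_mul, hab, map_one, ha, ← map_mul, hab, map_one]

theorem isLocalHom_val_comap {A' : Type*} [CommRing A'] [Algebra K A'] (g : A' →ₐ[K] A)
    [hB : IsLocalHom B.val] : IsLocalHom (B.comap g).val :=
  isLocalHom_val_iff.2 fun a b ha hab => isLocalHom_val_iff.1 hB (g a) (g b) ha <| by
    rw [← map_mul, hab, map_one]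

/-- The fractions whose numerator and denominator lie in `B` and whose denominator is a unit of the
ambient ring. -/
def unitFractions (B : Subalgebra K A) : Subalgebra K A where
  carrier := {a | ∃ q ∈ B, IsUnit q ∧ a * q ∈ B}
  mul_mem' := by
    rintro a b ⟨q, hq, hqu, haq⟩ ⟨r, hr, hru, hbr⟩
    exact ⟨q * r, mul_mem hq hr, hqu.mul hru, mul_mul_mul_comm a q b r ▸ mul_mem haq hbr⟩
  add_mem' := by
    rintro a b ⟨q, hq, hqu, haq⟩ ⟨r, hr, hru, hbr⟩
    refine ⟨q * r, mul_mem hq hr, hqu.mul hru, ?_⟩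
    have hab : (a + b) * (q * r) = a * q * r + b * r * q := by ring
    exact hab ▸ add_mem (mul_mem haq hr) (mul_mem hbr hq)
  algebraMap_mem' c := ⟨1, one_mem B, isUnit_one, (mul_one (algebraMap K A c)).symm ▸
    B.algebraMap_mem c⟩

theorem mem_unitFractions {a : A} : a ∈ unitFractions B ↔ ∃ q ∈ B, IsUnit q ∧ a * q ∈ B :=
  Iff.rfl

theorem le_unitFractions : B ≤ unitFractions B := fun a ha =>
  ⟨1, one_mem B, isUnit_one, (mul_one a).symm ▸ ha⟩

theorem unitFractions_le [hC : IsLocalHom C.val] (h : B ≤ C) : unitFractions B ≤ C := by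
  rintro a ⟨q, hq, hqu, haq⟩
  obtain ⟨r, hqr⟩ := hqu.exists_right_inv
  have ha : a = a * q * r := by rw [mul_assoc, hqr, mul_one]
  exact ha ▸ mul_mem (h haq) (isLocalHom_val_iff.1 hC q r (h hq) hqr)

instance isLocalHom_val_unitFractions : IsLocalHom (unitFractions B).val :=
  isLocalHom_val_iff.2 <| by
    rintro a b ⟨q, hq, hqu, haq⟩ hab
    refine ⟨a * q, haq, (IsUnit.of_mul_eq_one b hab).mul hqu, ?_⟩
    rwa [← mul_assoc, mul_comm b a, hab, one_mul]

end InverseClosed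

theorem mem_adjoin_range_iff_exists_eval {K σ τ : Type*} [CommSemiring K] {x : σ → τ → K}
    {f : τ → K} :
    f ∈ Algebra.adjoin K (Set.range x) ↔
      ∃ p : MvPolynomial σ K, ∀ s, MvPolynomial.eval (fun i => x i s) p = f s := by
  have heval (p : MvPolynomial σ K) (s : τ) :
      MvPolynomial.aeval x p s = MvPolynomial.eval (fun i => x i s) p := by
    have hcomp := MvPolynomial.comp_aeval x (Pi.evalAlgHom K (fun _ : τ => K) s)
    exact DFunLike.congr_fun hcomp p
  simp only [Algebra.adjoin_range_eq_range_aeval, AlgHom.mem_range, funext_iff, heval]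

section MatrixSubalgebra

variable {V α K A : Type*} [Fintype V] [LinearOrder α] [CommRing K] [CommRing A]
  [Algebra K A] {f : V ↪ α} {B : Subalgebra K A} {M X : Matrix V V A}

theorem exists_map_val_eq_of_mem_matrix [DecidableEq V] (hM : M ∈ B.matrix) :
    ∃ N : Matrix V V B, N.map B.val.toRingHom = M :=
  ⟨.of fun u v => ⟨M u v, hM u v⟩, rfl⟩

theorem map_val_mem_matrix [DecidableEq V] (N : Matrix V V B) : N.map B.val.toRingHom ∈ B.matrix :=
  fun u v => (N u v).2

theorem IsUnitUpperTriangular.inv_mem_matrix [DecidableEq V] (hX : IsUnitUpperTriangular f X)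
    (hXB : X ∈ B.matrix) : X⁻¹ ∈ B.matrix := by
  obtain ⟨Y, rfl⟩ := exists_map_val_eq_of_mem_matrix hXB
  have hinv : (Y.map B.val.toRingHom)⁻¹ = Y.adjugate.map B.val.toRingHom := by
    rw [inv_def, hX.det_eq_one, Ring.inverse_one, one_smul]
    exact (B.val.toRingHom.map_adjugate Y).symm
  exact hinv ▸ map_val_mem_matrix Y.adjugate

theorem leadingMinor_mem [DecidableEq V] (hM : M ∈ B.matrix) (v : V) : leadingMinor f M v ∈ B := by
  obtain ⟨N, rfl⟩ := exists_map_val_eq_of_mem_matrix hM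
  rw [leadingMinor_map]
  exact (leadingMinor f N v).2

theorem Triangularizes.mem_matrix [DecidableEq V] [IsLocalHom B.val] (h : Triangularizes f M X)
    (hM : M ∈ B.matrix) : X ∈ B.matrix := by
  obtain ⟨N, rfl⟩ := exists_map_val_eq_of_mem_matrix hM
  have hN (v : V) : IsUnit (leadingMinor f N v) := by
    have hunit := h.isUnit_leadingMinor v
    rw [leadingMinor_map] at hunit
    exact isUnit_of_map_unit B.val _ hunit
  obtain ⟨Y, hY⟩ := exists_triangularizes_of_isUnit_leadingMinor hN
  exact h.unique (hY.map B.val.toRingHom) ▸ map_val_mem_matrix Y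

theorem Triangularizes.mem_matrix_iff [DecidableEq V] [IsLocalHom B.val]
    (h : Triangularizes f M X) (hM : M.IsSymm) :
    M ∈ B.matrix ↔ X ∈ B.matrix ∧ ∀ v, (M * X) v v ∈ B := by
  refine ⟨fun hMB => ⟨h.mem_matrix hMB, fun v => mul_mem hMB (h.mem_matrix hMB) v v⟩, ?_⟩
  rintro ⟨hX, hpivot⟩
  have hinv := h.isUnitUpperTriangular.inv_mem_matrix hX
  rw [h.eq_inv_mul_diagonal_mul_inv hM]
  refine mul_mem (mul_mem (fun u v => hinv v u) fun u v => ?_) hinv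
  rw [diagonal_apply]
  split_ifs
  exacts [hpivot u, B.zero_mem]

end MatrixSubalgebra

section Pivots

variable {V α R : Type*} [Fintype V] [LinearOrder α] [CommRing R]

/-- The condition that `M` has a factorization as in `Triangularizes` with all pivots in `P`.
For real symmetric matrices and `P` the positive numbers this is positive definiteness. -/
def HasPivotsIn (f : V ↪ α) (P : Set R) (M : Matrix V V R) : Prop :=
  ∃ X, Triangularizes f M X ∧ ∀ v, (M * X) v v ∈ P

variable {f : V ↪ α} {P : Set R} {M : Matrix V V R}

theorem hasPivotsIn_univ_iff [DecidableEq V] :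
    HasPivotsIn f Set.univ M ↔ ∀ v, IsUnit (leadingMinor f M v) := by
  simp only [HasPivotsIn, Set.mem_univ, implies_true, and_true, exists_triangularizes_iff]

theorem posDef_iff_hasPivotsIn {M : Matrix V V ℝ} :
    M.PosDef ↔ M.IsSymm ∧ HasPivotsIn f (Set.Ioi 0) M := by
  have hcongr {X : Matrix V V ℝ} (h : Triangularizes f M X) (hM : M.IsSymm) :
      M.PosDef ↔ ∀ v, (M * X) v v ∈ Set.Ioi 0 := by
    rw [← ((isUnit_iff_isUnit_det X).2
      h.isUnitUpperTriangular.isUnit_det).posDef_star_left_conjugate_iff, star_eq_conjTranspose,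
      conjTranspose_eq_transpose_of_trivial, h.transpose_mul_mul_eq_diagonal hM,
      posDef_diagonal_iff]
    rfl
  refine ⟨fun hM => ?_, fun ⟨hM, X, hX, hpos⟩ => (hcongr hX hM).2 hpos⟩
  have hsymm : M.IsSymm := hM.isHermitian
  have hminor (v : V) : IsUnit (leadingMinor f M v) :=
    (hM.submatrix Subtype.val_injective).det_pos.ne'.isUnit
  obtain ⟨X, hX⟩ := exists_triangularizes_of_isUnit_leadingMinor hminor
  exact ⟨hsymm, X, hX, (hcongr hX hsymm).1 hM⟩

end Pivots

section Congruence

variable {V α R : Type*} [Fintype V] [DecidableEq V] [LinearOrder α] [CommRing R] {f : V ↪ α}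
  {M X A : Matrix V V R}

theorem IsUnitUpperTriangular.congr_mul (hA : IsUnitUpperTriangular f A) (M X : Matrix V V R) :
    A⁻¹ᵀ * M * A⁻¹ * (A * X) = A⁻¹ᵀ * (M * X) := by
  rw [Matrix.mul_assoc, nonsing_inv_mul_cancel_left _ _ hA.isUnit_det, Matrix.mul_assoc]

theorem Triangularizes.congr_mul_apply_self (h : Triangularizes f M X)
    (hA : IsUnitUpperTriangular f A) (v : V) :
    (A⁻¹ᵀ * M * A⁻¹ * (A * X)) v v = (M * X) v v := by
  rw [hA.congr_mul, blockTriangular_mul_apply_self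
    (OrderDual.toDual.injective.comp f.injective) hA.inv.blockTriangular.transpose
    h.mul_blockTriangular, transpose_apply, hA.inv.apply_self, one_mul]

theorem Triangularizes.congr (h : Triangularizes f M X) (hA : IsUnitUpperTriangular f A) :
    Triangularizes f (A⁻¹ᵀ * M * A⁻¹) (A * X) where
  isUnitUpperTriangular := hA.mul h.isUnitUpperTriangular
  mul_blockTriangular :=
    hA.congr_mul M X ▸ hA.inv.blockTriangular.transpose.mul h.mul_blockTriangular
  isUnit_pivot v := h.congr_mul_apply_self hA v ▸ h.isUnit_pivot v

theorem IsUnitUpperTriangular.hasPivotsIn_congr_iff {P : Set R} (hA : IsUnitUpperTriangular f A) :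
    HasPivotsIn f P (A⁻¹ᵀ * M * A⁻¹) ↔ HasPivotsIn f P M := by
  have hcongr {M A : Matrix V V R} (hA : IsUnitUpperTriangular f A) :
      HasPivotsIn f P M → HasPivotsIn f P (A⁻¹ᵀ * M * A⁻¹) := fun ⟨X, hX, hP⟩ =>
    ⟨A * X, hX.congr hA, fun v => hX.congr_mul_apply_self hA v ▸ hP v⟩
  refine ⟨fun h => ?_, hcongr hA⟩
  have hM := hcongr hA.inv h
  rwa [nonsing_inv_nonsing_inv _ hA.isUnit_det, Matrix.mul_assoc,
    nonsing_inv_mul_cancel_right _ _ hA.isUnit_det, ← Matrix.mul_assoc, ← transpose_mul,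
    nonsing_inv_mul _ hA.isUnit_det, transpose_one, Matrix.one_mul] at hM

end Congruence

namespace MixedGraph

section Parametrization

variable {V : Type*} [Fintype V] [DecidableEq V] {G : MixedGraph V} {R S : Type*}
  [CommRing R] [CommRing S]

/-- The pairs `(Λ, Ω)` of square matrices in which the parameters of a mixed graph live. -/
abbrev Param (V R : Type*) := Matrix V V R × Matrix V V R

/-- The support conditions on a parameter `(Λ, Ω)` of `G`, without any regularity condition. -/
structure IsSupported (G : MixedGraph V) (θ : Param V R) : Prop where
  directed : ∀ u v, (u, v) ∉ G.D → θ.1 u v = 0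
  isSymm : θ.2.IsSymm
  bidirected : ∀ u v, u ≠ v → (u, v) ∉ G.B → θ.2 u v = 0

/-- An injective ranking of the vertices along which all directed edges point upwards. -/
structure TopologicalOrder (G : MixedGraph V) where
  rank : V ↪ ℕ
  rank_lt : ∀ u v, (u, v) ∈ G.D → rank u < rank v

theorem Acyclic.nonempty_topologicalOrder (hG : G.Acyclic) : Nonempty G.TopologicalOrder := by
  let r : V → V → Prop := Relation.TransGen fun a b => (a, b) ∈ G.D
  have : IsStrictOrder V r := { irrefl := hG, trans := fun _ _ _ => Relation.TransGen.trans }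
  let := partialOrderOfSO r
  let : Fintype (LinearExtension V) := ‹Fintype V›
  let e := Fintype.orderIsoFinOfCardEq (LinearExtension V) rfl
  have hinj : Function.Injective fun v : V => (e.symm (toLinearExtension v) : ℕ) :=
    Fin.val_injective.comp (e.symm.injective.comp fun _ _ h => h)
  refine ⟨⟨⟨_, hinj⟩, fun u v huv => ?_⟩⟩
  have hlt : u < v := Relation.TransGen.single huv
  exact lt_of_le_of_ne (Fin.le_def.1 (e.symm.monotone (toLinearExtension.monotone hlt.le)))
    (hinj.ne hlt.ne)

/-- The mixed component containing `c` inherits a topological order. -/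
def TopologicalOrder.component (t : G.TopologicalOrder) (c : V) :
    (G.component c).TopologicalOrder where
  rank := (Function.Embedding.subtype _).trans t.rank
  rank_lt u v huv := t.rank_lt u v (Finset.mem_filter.1 huv).2.1

/-- The supported parameters of `G` for which all pivots of `Ω` are units lying in `P`. For
positive reals this is `Theta`; for `P = Set.univ` the leading minors of `Ω` are only required to
be invertible. -/
def TopologicalOrder.paramSpace (t : G.TopologicalOrder) (P : Set R) : Set (Param V R) :=
  {θ | G.IsSupported θ ∧ HasPivotsIn t.rank P θ.2}

namespace IsSupported

theorem isUnitUpperTriangular_one_sub {θ : Param V R} (hθ : G.IsSupported θ)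
    (t : G.TopologicalOrder) : IsUnitUpperTriangular t.rank (1 - θ.1) where
  blockTriangular u v huv := by
    rw [Matrix.sub_apply, one_apply_ne (ne_of_apply_ne t.rank huv.ne'),
      hθ.directed u v fun h => huv.asymm (t.rank_lt u v h), sub_zero]
  apply_self v := by
    rw [Matrix.sub_apply, one_apply_eq, hθ.directed v v (G.D_irrefl v), sub_zero]

end IsSupported

theorem isSymm_phi (Λ : Matrix V V R) {Ω : Matrix V V R} (hΩ : Ω.IsSymm) : (phi Λ Ω).IsSymm := by
  rw [IsSymm, phi, transpose_mul, transpose_mul, transpose_transpose, hΩ.eq, Matrix.mul_assoc]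

theorem phi_map (g : R →+* S) {Λ : Matrix V V R} (hΛ : IsUnit (1 - Λ).det) (Ω : Matrix V V R) :
    (phi Λ Ω).map g = phi (Λ.map g) (Ω.map g) := by
  have hinv : (1 - Λ.map g)⁻¹ = (1 - Λ)⁻¹.map g := by
    refine inv_eq_right_inv ?_
    have hone : (1 : Matrix V V S) = (1 : Matrix V V R).map g :=
      (Matrix.map_one g g.map_zero g.map_one).symm
    rw [hone, ← Matrix.map_sub g (map_sub g), ← Matrix.map_mul, mul_nonsing_inv _ hΛ]
  rw [phi, phi, Matrix.map_mul, Matrix.map_mul, hinv, transpose_map]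

theorem IsSupported.phi_mem_matrix_iff {K : Type*} [CommRing K] [Algebra K R]
    {B : Subalgebra K R} [IsLocalHom B.val] {θ : Param V R} (hθ : G.IsSupported θ)
    (t : G.TopologicalOrder) {X : Matrix V V R} (hX : Triangularizes t.rank θ.2 X) :
    phi θ.1 θ.2 ∈ B.matrix ↔ (1 - θ.1) * X ∈ B.matrix ∧ ∀ v, (θ.2 * X) v v ∈ B := by
  have hΛ := hθ.isUnitUpperTriangular_one_sub t
  rw [phi, (hX.congr hΛ).mem_matrix_iff (isSymm_phi θ.1 hθ.isSymm)]
  simp only [hX.congr_mul_apply_self hΛ]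

theorem hasPivotsIn_phi_iff {t : G.TopologicalOrder} {P : Set R} {θ : Param V R}
    (hθ : G.IsSupported θ) :
    HasPivotsIn t.rank P (phi θ.1 θ.2) ↔ HasPivotsIn t.rank P θ.2 :=
  (hθ.isUnitUpperTriangular_one_sub t).hasPivotsIn_congr_iff

theorem theta_eq_paramSpace (t : G.TopologicalOrder) :
    G.Theta = t.paramSpace (Set.Ioi (0 : ℝ)) := by
  ext θ
  refine ⟨fun ⟨⟨hΛ, _⟩, hΩ, hB⟩ => ?_, fun ⟨hθ, hP⟩ => ?_⟩
  · obtain ⟨hsymm, hP⟩ := (posDef_iff_hasPivotsIn (f := t.rank)).1 hΩ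
    exact ⟨⟨hΛ, hsymm, hB⟩, hP⟩
  · exact ⟨⟨hθ.directed, (hθ.isUnitUpperTriangular_one_sub t).isUnit_det⟩,
      posDef_iff_hasPivotsIn.2 ⟨hθ.isSymm, hP⟩, hθ.bidirected⟩

theorem mem_thetaC_iff (t : G.TopologicalOrder) {θ : Param V ℂ} :
    θ ∈ G.ThetaC ↔ G.IsSupported θ :=
  ⟨fun ⟨⟨hΛ, _⟩, hsymm, hB⟩ => ⟨hΛ, hsymm, hB⟩, fun hθ =>
    ⟨⟨hθ.directed, (hθ.isUnitUpperTriangular_one_sub t).isUnit_det⟩, hθ.isSymm, hθ.bidirected⟩⟩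

theorem zero_one_mem_paramSpace {t : G.TopologicalOrder} {P : Set R} (hP : 1 ∈ P) :
    ((0, 1) : Param V R) ∈ t.paramSpace P := by
  refine ⟨⟨fun _ _ _ => rfl, isSymm_one, fun _ _ huv _ => one_apply_ne huv⟩, 1, ⟨.one, ?_, ?_⟩, ?_⟩
  · simpa only [Matrix.one_mul] using blockTriangular_one
  · simp
  · simp [hP]

theorem IsSupported.lineMap {θ₁ θ₂ : Param V R} (h₁ : G.IsSupported θ₁) (h₂ : G.IsSupported θ₂)
    (x : R) : G.IsSupported (AffineMap.lineMap θ₁ θ₂ x) := by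
  rw [AffineMap.lineMap_apply_module]
  refine ⟨fun u v huv => ?_, (h₁.isSymm.smul _).add (h₂.isSymm.smul _), fun u v huv hB => ?_⟩
  · simp only [Prod.fst_add, Prod.smul_fst, Matrix.add_apply, Matrix.smul_apply,
      h₁.directed u v huv, h₂.directed u v huv, smul_zero, add_zero]
  · simp only [Prod.snd_add, Prod.smul_snd, Matrix.add_apply, Matrix.smul_apply,
      h₁.bidirected u v huv hB, h₂.bidirected u v huv hB, smul_zero, add_zero]

section Component

variable {c : V}

theorem mem_compV_of_mem_comp {v : V} (hv : v ∈ G.comp c) : v ∈ G.compV c :=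
  Finset.mem_union_left _ hv

theorem mem_compV_of_directed {u v : V} (huv : (u, v) ∈ G.D) (hv : v ∈ G.comp c) :
    u ∈ G.compV c :=
  Finset.mem_union_right _ <|
    Finset.mem_biUnion.2 ⟨v, hv, Finset.mem_filter.2 ⟨Finset.mem_univ u, huv⟩⟩

theorem mem_comp_of_bidirected {u v : V} (huv : (u, v) ∈ G.B) (hv : v ∈ G.comp c) :
    u ∈ G.comp c := by
  simp only [comp, Finset.mem_filter_univ] at hv ⊢
  exact hv.tail (G.B_symm u v huv)

theorem mem_component_D {u v : G.compV c} :
    (u, v) ∈ (G.component c).D ↔ (u.1, v.1) ∈ G.D ∧ v.1 ∈ G.comp c :=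
  Finset.mem_filter_univ _

theorem mem_component_B {u v : G.compV c} :
    (u, v) ∈ (G.component c).B ↔ (u.1, v.1) ∈ G.B ∧ u.1 ∈ G.comp c ∧ v.1 ∈ G.comp c :=
  Finset.mem_filter_univ _

namespace IsSupported

variable {η : Param (G.compV c) R} {X : Matrix (G.compV c) (G.compV c) R}
  {t : G.TopologicalOrder} {u v : G.compV c}

theorem component_directed_eq_zero (hη : (G.component c).IsSupported η) (hv : v.1 ∉ G.comp c) :
    η.1 u v = 0 :=
  hη.directed u v fun h => hv (mem_component_D.1 h).2

theorem component_bidirected_eq_zero (hη : (G.component c).IsSupported η) (huv : u ≠ v)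
    (h : u.1 ∉ G.comp c ∨ v.1 ∉ G.comp c) : η.2 u v = 0 :=
  hη.bidirected u v huv fun hB => h.elim (· (mem_component_B.1 hB).2.1)
    (· (mem_component_B.1 hB).2.2)

theorem component_triangularizes_eq_one (hη : (G.component c).IsSupported η)
    (hX : Triangularizes (t.component c).rank η.2 X) (h : u.1 ∉ G.comp c ∨ v.1 ∉ G.comp c) :
    X u v = (1 : Matrix _ _ R) u v := by
  rcases eq_or_ne u v with rfl | huv
  · rw [hX.isUnitUpperTriangular.apply_self, one_apply_eq]
  · -- Vertices outside the bidirected component are isolated in `Ω`, hence form their own blocks.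
    let χ : G.compV c → Option (G.compV c) := fun w => if w.1 ∈ G.comp c then none else some w
    rw [one_apply_ne huv]
    refine hX.apply_eq_zero_of_ne (χ := χ) (fun a b hab => ?_) ?_
    · refine hη.component_bidirected_eq_zero (ne_of_apply_ne χ hab) ?_
      by_contra! hmem
      exact hab ((if_pos hmem.1).trans (if_pos hmem.2).symm)
    · intro hχ
      simp only [χ] at hχ
      split_ifs at hχ with hu hv
      · exact h.elim (· hu) (· hv)
      · exact huv (Option.some_injective _ hχ)

theorem component_triangularizes_eq_zero (hη : (G.component c).IsSupported η)
    (hX : Triangularizes (t.component c).rank η.2 X) (hv : v.1 ∈ G.comp c) (hu : u.1 ∉ G.comp c) :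
    X u v = 0 := by
  rw [hη.component_triangularizes_eq_one hX (.inl hu), one_apply_ne]
  rintro rfl
  exact hu hv

theorem component_pivot (hη : (G.component c).IsSupported η)
    (hX : Triangularizes (t.component c).rank η.2 X) (hv : v.1 ∉ G.comp c) :
    (η.2 * X) v v = η.2 v v := by
  rw [Matrix.mul_apply, Finset.sum_eq_single_of_mem v (Finset.mem_univ v) fun w _ hw => by
      rw [hη.component_triangularizes_eq_one hX (.inr hv), one_apply_ne hw, mul_zero],
    hX.isUnitUpperTriangular.apply_self, mul_one]

theorem component_one_sub_mul (hη : (G.component c).IsSupported η)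
    (hX : Triangularizes (t.component c).rank η.2 X) (hv : v.1 ∉ G.comp c) :
    ((1 - η.1) * X) u v = (1 : Matrix _ _ R) u v := by
  rw [Matrix.mul_apply, Finset.sum_congr rfl fun w _ => by
      rw [hη.component_triangularizes_eq_one hX (.inr hv)], ← Matrix.mul_apply, Matrix.mul_one,
    Matrix.sub_apply, hη.component_directed_eq_zero hv, sub_zero]

end IsSupported

end Component

section Glue

variable {ι : Type*} {rep : ι → V} (hrep : ∀ v, ∃! j, v ∈ G.comp (rep j))

/-- The index of the bidirected component of `v`. -/
noncomputable def compIndex (v : V) : ι := (hrep v).choose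

theorem mem_comp_compIndex (v : V) : v ∈ G.comp (rep (compIndex hrep v)) :=
  (hrep v).choose_spec.1

theorem compIndex_eq {v : V} {j : ι} (hv : v ∈ G.comp (rep j)) : compIndex hrep v = j :=
  (hrep v).unique (mem_comp_compIndex hrep v) hv

/-- The matrix on `V` whose column `v` is column `v` of the matrix belonging to the mixed component
of `v`, extended by zero. -/
noncomputable def glueColumns (M : ∀ j, Matrix (G.compV (rep j)) (G.compV (rep j)) R) :
    Matrix V V R := .of fun u v =>
  if hu : u ∈ G.compV (rep (compIndex hrep v)) then
    M (compIndex hrep v) ⟨u, hu⟩ ⟨v, mem_compV_of_mem_comp (mem_comp_compIndex hrep v)⟩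
  else 0

/-- The parameter of `G` assembled from parameters of its mixed components. -/
noncomputable def glue (η : ∀ j, Param (G.compV (rep j)) R) : Param V R :=
  (glueColumns hrep fun j => (η j).1, glueColumns hrep fun j => (η j).2)

variable {hrep} {M N : ∀ j, Matrix (G.compV (rep j)) (G.compV (rep j)) R}

theorem glueColumns_of_mem {j : ι} {u v : V} (hv : v ∈ G.comp (rep j)) (hu : u ∈ G.compV (rep j)) :
    glueColumns hrep M u v = M j ⟨u, hu⟩ ⟨v, mem_compV_of_mem_comp hv⟩ := by
  obtain rfl := compIndex_eq hrep hv
  exact dif_pos hu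

theorem glueColumns_coe {j : ι} {u v : G.compV (rep j)} (hv : v.1 ∈ G.comp (rep j)) :
    glueColumns hrep M u v = M j u v :=
  glueColumns_of_mem hv u.2

theorem glueColumns_eq_zero {u v : V}
    (h : ∀ j (hu : u ∈ G.compV (rep j)) (hv : v ∈ G.comp (rep j)),
      M j ⟨u, hu⟩ ⟨v, mem_compV_of_mem_comp hv⟩ = 0) :
    glueColumns hrep M u v = 0 := by
  have hv := mem_comp_compIndex hrep v
  by_cases hu : u ∈ G.compV (rep (compIndex hrep v))
  · exact (dif_pos hu).trans (h _ hu hv)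
  · exact dif_neg hu

theorem glueColumns_one : glueColumns hrep (fun _ => (1 : Matrix _ _ R)) = 1 := by
  ext u v
  rcases eq_or_ne u v with rfl | huv
  · have hu := mem_comp_compIndex hrep u
    rw [glueColumns_of_mem hu (mem_compV_of_mem_comp hu), one_apply_eq, one_apply_eq]
  · rw [one_apply_ne huv]
    exact glueColumns_eq_zero fun _ _ _ => one_apply_ne (Subtype.coe_ne_coe.1 huv)

theorem glueColumns_sub : glueColumns hrep (fun j => M j - N j) =
    glueColumns hrep M - glueColumns hrep N := by
  ext u v
  by_cases hu : u ∈ G.compV (rep (compIndex hrep v))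
  · simp only [glueColumns, of_apply, dif_pos hu, Matrix.sub_apply]
  · simp only [glueColumns, of_apply, dif_neg hu, Matrix.sub_apply, sub_zero]

theorem glueColumns_mul (hN : ∀ j (u v : G.compV (rep j)), v.1 ∈ G.comp (rep j) →
      u.1 ∉ G.comp (rep j) → N j u v = 0) :
    glueColumns hrep M * glueColumns hrep N = glueColumns hrep (fun j => M j * N j) := by
  ext u v
  have hv := mem_comp_compIndex hrep v
  set j := compIndex hrep v
  have hzero {w : V} (hw : w ∉ G.comp (rep j)) : glueColumns hrep N w v = 0 := by
    refine glueColumns_eq_zero fun i _ hvi => hN i _ _ hvi ?_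
    have hij : j = i := compIndex_eq hrep hvi
    exact fun hwi => hw (hij ▸ hwi)
  rw [Matrix.mul_apply]
  by_cases hu : u ∈ G.compV (rep j)
  · have hout (w : V) (hw : w ∉ G.compV (rep j)) :
        glueColumns hrep M u w * glueColumns hrep N w v = 0 := by
      rw [hzero (hw ∘ mem_compV_of_mem_comp), mul_zero]
    rw [glueColumns_of_mem hv hu, Matrix.mul_apply,
      ← Finset.sum_subset (Finset.subset_univ (G.compV (rep j))) fun w _ => hout w,
      ← Finset.sum_coe_sort]
    refine Finset.sum_congr rfl fun w _ => ?_
    by_cases hw : w.1 ∈ G.comp (rep j)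
    · rw [glueColumns_of_mem hw hu, glueColumns_of_mem hv w.2]
    · rw [hN j w _ hv hw, hzero hw, mul_zero, mul_zero]
  · rw [show glueColumns hrep (fun j => M j * N j) u v = 0 from dif_neg hu]
    refine Finset.sum_eq_zero fun w _ => ?_
    by_cases hw : w ∈ G.comp (rep j)
    · obtain hwj := compIndex_eq hrep hw
      rw [show glueColumns hrep M u w = 0 from dif_neg (hwj ▸ hu), zero_mul]
    · rw [hzero hw, mul_zero]

variable {P : Set R} {t : G.TopologicalOrder} {η : ∀ j, Param (G.compV (rep j)) R}
  {X : ∀ j, Matrix (G.compV (rep j)) (G.compV (rep j)) R}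

theorem isSupported_glue (hη : ∀ j, (G.component (rep j)).IsSupported (η j)) :
    G.IsSupported (glue hrep η) where
  directed u v huv := glueColumns_eq_zero fun j _ _ =>
    (hη j).directed _ _ fun h => huv (mem_component_D.1 h).1
  isSymm := by
    refine IsSymm.ext fun u v => ?_
    have hu := mem_comp_compIndex hrep u
    have hv := mem_comp_compIndex hrep v
    by_cases huv : compIndex hrep u = compIndex hrep v
    · rw [huv] at hu
      simp only [glue, glueColumns_of_mem hu (mem_compV_of_mem_comp hv),
        glueColumns_of_mem hv (mem_compV_of_mem_comp hu)]
      exact (hη _).isSymm.apply _ _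
    · have hne {u v : V} (huv : compIndex hrep u ≠ compIndex hrep v) :
          (glue hrep η).2 u v = 0 := by
        refine glueColumns_eq_zero fun j _ hv => (hη j).component_bidirected_eq_zero
          (Subtype.coe_ne_coe.1 (ne_of_apply_ne _ huv)) (.inl fun hu => huv ?_)
        rw [compIndex_eq hrep hu, compIndex_eq hrep hv]
      rw [hne huv, hne (Ne.symm huv)]
  bidirected u v huv hB := glueColumns_eq_zero fun j _ _ =>
    (hη j).bidirected _ _ (Subtype.coe_ne_coe.1 huv) fun h => hB (mem_component_B.1 h).1

theorem glue_snd_mul (hη : ∀ j, (G.component (rep j)).IsSupported (η j))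
    (hX : ∀ j, Triangularizes (t.component (rep j)).rank (η j).2 (X j)) :
    (glue hrep η).2 * glueColumns hrep X = glueColumns hrep fun j => (η j).2 * X j :=
  glueColumns_mul (M := fun j => (η j).2) (N := X) fun j _ _ hv hu =>
    (hη j).component_triangularizes_eq_zero (hX j) hv hu

theorem one_sub_glue_fst_mul (hη : ∀ j, (G.component (rep j)).IsSupported (η j))
    (hX : ∀ j, Triangularizes (t.component (rep j)).rank (η j).2 (X j)) :
    (1 - (glue hrep η).1) * glueColumns hrep X = glueColumns hrep fun j => (1 - (η j).1) * X j := by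
  rw [glue, ← glueColumns_one (hrep := hrep), ← glueColumns_sub]
  exact glueColumns_mul (M := fun j => 1 - (η j).1) (N := X) fun j _ _ hv hu =>
    (hη j).component_triangularizes_eq_zero (hX j) hv hu

theorem glue_snd_mul_apply_self (hη : ∀ j, (G.component (rep j)).IsSupported (η j))
    (hX : ∀ j, Triangularizes (t.component (rep j)).rank (η j).2 (X j)) {j : ι}
    {v : G.compV (rep j)} (hv : v.1 ∈ G.comp (rep j)) :
    ((glue hrep η).2 * glueColumns hrep X) v v = ((η j).2 * X j) v v := by
  rw [glue_snd_mul hη hX, glueColumns_coe hv]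

theorem triangularizes_glue (hη : ∀ j, (G.component (rep j)).IsSupported (η j))
    (hX : ∀ j, Triangularizes (t.component (rep j)).rank (η j).2 (X j)) :
    Triangularizes t.rank (glue hrep η).2 (glueColumns hrep X) where
  isUnitUpperTriangular := by
    refine ⟨fun u v huv => glueColumns_eq_zero fun j _ _ => ?_, fun v => ?_⟩
    · exact (hX j).isUnitUpperTriangular.blockTriangular huv
    · have hv := mem_comp_compIndex hrep v
      rw [glueColumns_of_mem hv (mem_compV_of_mem_comp hv),
        (hX _).isUnitUpperTriangular.apply_self]
  mul_blockTriangular u v huv := by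
    rw [glue_snd_mul hη hX]
    exact glueColumns_eq_zero fun j _ _ => (hX j).mul_blockTriangular huv
  isUnit_pivot v := by
    have hv := mem_comp_compIndex hrep v
    rw [glue_snd_mul_apply_self hη hX (v := ⟨v, mem_compV_of_mem_comp hv⟩) hv]
    exact (hX _).isUnit_pivot _

/-- The parameters of the mixed components form a function of the glued covariance matrix and of
the variances outside the bidirected components, and conversely: membership in an inverse-closed
subalgebra expresses that functional dependence. -/
theorem forall_phi_mem_matrix_iff {K : Type*} [CommRing K] [Algebra K R] {B : Subalgebra K R}
    [IsLocalHom B.val] (hη : ∀ j, η j ∈ (t.component (rep j)).paramSpace P) :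
    (∀ j, phi (η j).1 (η j).2 ∈ B.matrix) ↔
      phi (glue hrep η).1 (glue hrep η).2 ∈ B.matrix ∧
        ∀ j (v : G.compV (rep j)), v.1 ∉ G.comp (rep j) → (η j).2 v v ∈ B := by
  choose hsupp X hX _ using hη
  rw [(isSupported_glue hsupp).phi_mem_matrix_iff t (triangularizes_glue hsupp hX),
    one_sub_glue_fst_mul hsupp hX,
    forall_congr' fun j => (hsupp j).phi_mem_matrix_iff (t.component (rep j)) (hX j)]
  constructor
  · refine fun h => ⟨⟨fun u v => ?_, fun v => ?_⟩, fun j v hv => ?_⟩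
    · have hv := mem_comp_compIndex hrep v
      by_cases hu : u ∈ G.compV (rep (compIndex hrep v))
      · rw [glueColumns_of_mem hv hu]
        exact (h _).1 _ _
      · rw [glueColumns, of_apply, dif_neg hu]
        exact B.zero_mem
    · have hv := mem_comp_compIndex hrep v
      rw [glue_snd_mul_apply_self hsupp hX (v := ⟨v, mem_compV_of_mem_comp hv⟩) hv]
      exact (h _).2 _
    · exact (hsupp j).component_pivot (hX j) hv ▸ (h j).2 v
  · refine fun ⟨⟨hcol, hpivot⟩, hω⟩ j => ⟨fun u v => ?_, fun v => ?_⟩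
    · by_cases hv : v.1 ∈ G.comp (rep j)
      · exact glueColumns_coe (M := fun j => (1 - (η j).1) * X j) hv ▸ hcol u v
      · rw [(hsupp j).component_one_sub_mul (hX j) hv]
        exact one_mem B.matrix u v
    · by_cases hv : v.1 ∈ G.comp (rep j)
      · exact glue_snd_mul_apply_self hsupp hX hv ▸ hpivot v
      · exact (hsupp j).component_pivot (hX j) hv ▸ hω j v hv

theorem glue_mem_paramSpace (hη : ∀ j, η j ∈ (t.component (rep j)).paramSpace P) :
    glue hrep η ∈ t.paramSpace P := by
  choose hsupp X hX hP using hη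
  refine ⟨isSupported_glue hsupp, _, triangularizes_glue hsupp hX, fun v => ?_⟩
  have hv := mem_comp_compIndex hrep v
  rw [glue_snd_mul_apply_self hsupp hX (v := ⟨v, mem_compV_of_mem_comp hv⟩) hv]
  exact hP _ _

end Glue

section Restrict

/-- The matrix on the mixed component of `c` that agrees with `N` in the columns of the bidirected
component of `c` and with `diagonal ω` in the remaining columns. -/
noncomputable def restrictColumns (c : V) (ω : G.compV c → R) (N : Matrix V V R) :
    Matrix (G.compV c) (G.compV c) R := .of fun u v =>
  if v.1 ∈ G.comp c then N u v else diagonal ω u v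

/-- The parameter of the mixed component of `c` read off from a parameter of `G`. The variances
`ω` of the vertices outside the bidirected component are not determined by the latter. -/
noncomputable def restrict (c : V) (ω : G.compV c → R) (θ : Param V R) : Param (G.compV c) R :=
  (restrictColumns c 0 θ.1, restrictColumns c ω θ.2)

variable {c : V} {ω : G.compV c → R} {N X : Matrix V V R} {u v : G.compV c}

theorem restrictColumns_of_mem (hv : v.1 ∈ G.comp c) : restrictColumns c ω N u v = N u v :=
  if_pos hv

theorem restrictColumns_of_notMem (hv : v.1 ∉ G.comp c) :
    restrictColumns c ω N u v = diagonal ω u v :=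
  if_neg hv

theorem restrictColumns_eq_zero (huv : u ≠ v) (hN : v.1 ∈ G.comp c → N u v = 0) :
    restrictColumns c ω N u v = 0 := by
  by_cases hv : v.1 ∈ G.comp c
  · rw [restrictColumns_of_mem hv, hN hv]
  · rw [restrictColumns_of_notMem hv, diagonal_apply_ne _ huv]

theorem restrictColumns_mul (hX : ∀ u v, u ∉ G.comp c → v ∈ G.comp c → X u v = 0) :
    restrictColumns c ω N * restrictColumns c 1 X = restrictColumns c ω (N * X) := by
  ext u v
  rw [Matrix.mul_apply]
  by_cases hv : v.1 ∈ G.comp c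
  · have hout (w : V) (hw : w ∉ G.compV c) : N u w * X w v = 0 := by
      rw [hX w v (hw ∘ mem_compV_of_mem_comp) hv, mul_zero]
    rw [restrictColumns_of_mem hv, Matrix.mul_apply,
      ← Finset.sum_subset (Finset.subset_univ (G.compV c))
        fun w _ => hout w, ← Finset.sum_coe_sort (G.compV c)]
    refine Fintype.sum_congr _ _ fun w => ?_
    rw [restrictColumns_of_mem hv]
    by_cases hw : w.1 ∈ G.comp c
    · rw [restrictColumns_of_mem hw]
    · rw [hX w v hw hv, mul_zero, mul_zero]
  · rw [Finset.sum_eq_single_of_mem v (Finset.mem_univ v) fun w _ hw => by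
        rw [restrictColumns_eq_zero hw fun h => absurd h hv, mul_zero],
      restrictColumns_of_notMem hv, restrictColumns_of_notMem hv, restrictColumns_of_notMem hv,
      diagonal_apply_eq, Pi.one_apply, mul_one]

variable {P : Set R} {t : G.TopologicalOrder} {θ : Param V R}

theorem IsSupported.restrict (hθ : G.IsSupported θ) (ω : G.compV c → R) :
    (G.component c).IsSupported (restrict c ω θ) where
  directed u v huv := by
    by_cases hv : v.1 ∈ G.comp c
    · exact (restrictColumns_of_mem hv).trans <|
        hθ.directed u v fun h => huv (mem_component_D.2 ⟨h, hv⟩)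
    · exact (restrictColumns_of_notMem hv).trans (by rw [diagonal_zero', Matrix.zero_apply])
  isSymm := by
    have hmixed {u v : G.compV c} (hu : u.1 ∉ G.comp c) (hv : v.1 ∈ G.comp c) :
        θ.2 u v = 0 ∧ diagonal ω v u = 0 := by
      have huv : v ≠ u := by
        rintro rfl
        exact hu hv
      exact ⟨hθ.bidirected u v (Subtype.coe_ne_coe.2 huv.symm) fun h =>
        hu (mem_comp_of_bidirected h hv), diagonal_apply_ne _ huv⟩
    refine IsSymm.ext fun u v => ?_
    by_cases hu : u.1 ∈ G.comp c <;> by_cases hv : v.1 ∈ G.comp c <;>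
      simp only [MixedGraph.restrict, restrictColumns_of_mem, restrictColumns_of_notMem, hu, hv,
        not_false_eq_true]
    · exact hθ.isSymm.apply _ _
    · rw [(hmixed hv hu).1, (hmixed hv hu).2]
    · rw [(hmixed hu hv).1, (hmixed hu hv).2]
    · exact (isSymm_diagonal ω).apply _ _
  bidirected u v huv hB := restrictColumns_eq_zero huv fun hv =>
    hθ.bidirected u v (Subtype.coe_ne_coe.2 huv) fun h => hB <|
      mem_component_B.2 ⟨h, mem_comp_of_bidirected h hv, hv⟩

theorem IsSupported.triangularizes_eq_zero (hθ : G.IsSupported θ)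
    (hX : Triangularizes t.rank θ.2 X) {u v : V} (hu : u ∉ G.comp c) (hv : v ∈ G.comp c) :
    X u v = 0 := by
  refine hX.apply_eq_zero_of_ne (χ := (· ∈ G.comp c)) (fun a b hab => ?_) fun h => hu (h ▸ hv)
  exact hθ.bidirected a b (ne_of_apply_ne _ hab) fun hB => hab <| propext
    ⟨mem_comp_of_bidirected (G.B_symm a b hB), mem_comp_of_bidirected hB⟩

theorem restrict_snd_mul (hθ : G.IsSupported θ) (hX : Triangularizes t.rank θ.2 X) :
    (restrict c ω θ).2 * restrictColumns c 1 X = restrictColumns c ω (θ.2 * X) :=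
  restrictColumns_mul fun _ _ => hθ.triangularizes_eq_zero hX

theorem triangularizes_restrict (hθ : G.IsSupported θ) (hX : Triangularizes t.rank θ.2 X)
    (hω : ∀ v : G.compV c, v.1 ∉ G.comp c → IsUnit (ω v)) :
    Triangularizes (t.component c).rank (restrict c ω θ).2 (restrictColumns c 1 X) where
  isUnitUpperTriangular := by
    refine ⟨fun u v huv => ?_, fun v => ?_⟩
    · exact restrictColumns_eq_zero (ne_of_apply_ne _ huv.ne') fun _ =>
        hX.isUnitUpperTriangular.blockTriangular huv
    · by_cases hv : v.1 ∈ G.comp c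
      · exact (restrictColumns_of_mem hv).trans (hX.isUnitUpperTriangular.apply_self v)
      · exact (restrictColumns_of_notMem hv).trans (diagonal_apply_eq _ v)
  mul_blockTriangular u v huv := by
    rw [restrict_snd_mul hθ hX]
    exact restrictColumns_eq_zero (ne_of_apply_ne _ huv.ne') fun _ => hX.mul_blockTriangular huv
  isUnit_pivot v := by
    rw [restrict_snd_mul hθ hX]
    by_cases hv : v.1 ∈ G.comp c
    · exact restrictColumns_of_mem (ω := ω) hv ▸ hX.isUnit_pivot v
    · rw [restrictColumns_of_notMem hv, diagonal_apply_eq]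
      exact hω v hv

theorem restrict_mem_paramSpace (hθ : θ ∈ t.paramSpace P)
    (hω : ∀ v : G.compV c, v.1 ∉ G.comp c → IsUnit (ω v) ∧ ω v ∈ P) :
    restrict c ω θ ∈ (t.component c).paramSpace P := by
  obtain ⟨hsupp, X, hX, hP⟩ := hθ
  refine ⟨hsupp.restrict ω, _, triangularizes_restrict hsupp hX fun v hv => (hω v hv).1,
    fun v => ?_⟩
  rw [restrict_snd_mul hsupp hX]
  by_cases hv : v.1 ∈ G.comp c
  · exact restrictColumns_of_mem (ω := ω) hv ▸ hP v
  · rw [restrictColumns_of_notMem hv, diagonal_apply_eq]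
    exact (hω v hv).2

end Restrict

section GlueRestrict

variable {ι : Type*} {rep : ι → V} {hrep : ∀ v, ∃! j, v ∈ G.comp (rep j)} {θ : Param V R}

theorem glue_restrict (hθ : G.IsSupported θ) (ω : ∀ j, G.compV (rep j) → R) :
    glue hrep (fun j => restrict (rep j) (ω j) θ) = θ := by
  have hglue {N : Matrix V V R} {ω : ∀ j, G.compV (rep j) → R}
      (hN : ∀ j u v, u ∉ G.compV (rep j) → v ∈ G.comp (rep j) → N u v = 0) :
      glueColumns hrep (fun j => restrictColumns (rep j) (ω j) N) = N := by
    ext u v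
    have hv := mem_comp_compIndex hrep v
    by_cases hu : u ∈ G.compV (rep (compIndex hrep v))
    · rw [glueColumns_of_mem hv hu, restrictColumns_of_mem hv]
    · exact (dif_neg hu).trans (hN _ u v hu hv).symm
  refine Prod.ext (hglue (ω := fun _ => 0) fun j u v hu hv => ?_) (hglue fun j u v hu hv => ?_)
  · exact hθ.directed u v fun h => hu (mem_compV_of_directed h hv)
  · refine hθ.bidirected u v ?_ fun h => hu (mem_compV_of_mem_comp (mem_comp_of_bidirected h hv))
    rintro rfl
    exact hu (mem_compV_of_mem_comp hv)

theorem restrict_glue {η : ∀ j, Param (G.compV (rep j)) R} {j : ι} {ω : G.compV (rep j) → R}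
    (hη : (G.component (rep j)).IsSupported (η j))
    (hω : ∀ v : G.compV (rep j), v.1 ∉ G.comp (rep j) → ω v = (η j).2 v v) :
    restrict (rep j) ω (glue hrep η) = η j := by
  ext u v
  · by_cases hv : v.1 ∈ G.comp (rep j)
    · exact (restrictColumns_of_mem hv).trans (glueColumns_coe (M := fun j => (η j).1) hv)
    · refine (restrictColumns_of_notMem hv).trans ?_
      rw [hη.component_directed_eq_zero hv, diagonal_zero', Matrix.zero_apply]
  · by_cases hv : v.1 ∈ G.comp (rep j)
    · exact (restrictColumns_of_mem hv).trans (glueColumns_coe (M := fun j => (η j).2) hv)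
    · refine (restrictColumns_of_notMem hv).trans ?_
      rcases eq_or_ne u v with rfl | huv
      · rw [diagonal_apply_eq, hω u hv]
      · rw [diagonal_apply_ne _ huv, hη.component_bidirected_eq_zero huv (.inr hv)]

theorem eq_of_glue_eq {η η' : ∀ j, Param (G.compV (rep j)) R} (h : glue hrep η = glue hrep η')
    {j : ι} (hη : (G.component (rep j)).IsSupported (η j))
    (hη' : (G.component (rep j)).IsSupported (η' j))
    (hvar : ∀ v : G.compV (rep j), v.1 ∉ G.comp (rep j) → (η j).2 v v = (η' j).2 v v) :
    η j = η' j := by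
  rw [← restrict_glue (hrep := hrep) (ω := (η j).2.diag) hη fun _ _ => rfl, h]
  exact restrict_glue hη' hvar

end GlueRestrict

variable {t : G.TopologicalOrder} {P : Set R}

section Pack

variable {τ : Type*}

/-- A family of parameters regarded as one parameter over the ring of functions on the index
set, so that identities of functions of the parameter become identities of matrix entries. -/
def pack (F : τ → Param V R) : Param V (τ → R) :=
  (.of fun u v s => (F s).1 u v, .of fun u v s => (F s).2 u v)

theorem IsSupported.pack {F : τ → Param V R} (hF : ∀ s, G.IsSupported (F s)) :
    G.IsSupported (pack F) where
  directed u v huv := funext fun s => (hF s).directed u v huv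
  isSymm := IsSymm.ext fun u v => funext fun s => (hF s).isSymm.apply u v
  bidirected u v huv hB := funext fun s => (hF s).bidirected u v huv hB

theorem pack_mem_paramSpace {F : τ → Param V R} (hF : ∀ s, F s ∈ t.paramSpace P) :
    pack F ∈ t.paramSpace (Set.univ : Set (τ → R)) := by
  refine ⟨.pack fun s => (hF s).1, hasPivotsIn_univ_iff.2 fun v => Pi.isUnit_iff.2 fun s => ?_⟩
  obtain ⟨_, X, hX, _⟩ := hF s
  have hmap : leadingMinor t.rank (F s).2 v = leadingMinor t.rank (pack F).2 v s :=
    leadingMinor_map (Pi.evalRingHom (fun _ => R) s) (pack F).2 v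
  exact hmap ▸ hX.isUnit_leadingMinor v

theorem phi_pack_apply {F : τ → Param V R} (hF : ∀ s, F s ∈ t.paramSpace P) (u v : V) (s : τ) :
    phi (pack F).1 (pack F).2 u v s = phi (F s).1 (F s).2 u v := by
  have hdet := ((IsSupported.pack fun s => (hF s).1).isUnitUpperTriangular_one_sub t).isUnit_det
  exact congrFun₂ (phi_map (Pi.evalRingHom (fun _ => R) s) hdet (pack F).2) u v

theorem pack_glue {ι : Type*} {rep : ι → V} {hrep : ∀ v, ∃! j, v ∈ G.comp (rep j)}
    (F : τ → ∀ j, Param (G.compV (rep j)) R) :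
    pack (fun s => glue hrep (F s)) = glue hrep fun j => pack fun s => F s j := by
  have hcolumns (M : τ → ∀ j, Matrix (G.compV (rep j)) (G.compV (rep j)) R) :
      (.of fun u v s => glueColumns hrep (M s) u v : Matrix V V (τ → R)) =
        glueColumns hrep fun j => .of fun u v s => M s j u v := by
    ext u v s
    simp only [glueColumns, of_apply]
    split_ifs <;> rfl
  exact Prod.ext (hcolumns fun s j => (F s j).1) (hcolumns fun s j => (F s j).2)

end Pack

theorem update_mem_paramSpace {ι : Type*} {rep : ι → V} {η : ∀ j, Param (G.compV (rep j)) R}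
    (hη : ∀ j, η j ∈ (t.component (rep j)).paramSpace P) {j : ι}
    {a : Param (G.compV (rep j)) R} (ha : a ∈ (t.component (rep j)).paramSpace P) (i : ι) :
    Function.update η j a i ∈ (t.component (rep i)).paramSpace P :=
  (Function.forall_update_iff η fun i x => x ∈ (t.component (rep i)).paramSpace P).2
    ⟨ha, fun i _ => hη i⟩ i

section Fiber

variable {ι : Type*} {rep : ι → V} {hrep : ∀ v, ∃! j, v ∈ G.comp (rep j)}
  {η η' : ∀ j, Param (G.compV (rep j)) R}

theorem forall_phi_eq_iff (hη : ∀ j, η j ∈ (t.component (rep j)).paramSpace P)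
    (hη' : ∀ j, η' j ∈ (t.component (rep j)).paramSpace P) :
    (∀ j, phi (η j).1 (η j).2 = phi (η' j).1 (η' j).2) ↔
      phi (glue hrep η).1 (glue hrep η).2 = phi (glue hrep η').1 (glue hrep η').2 ∧
        ∀ j (v : G.compV (rep j)), v.1 ∉ G.comp (rep j) → (η j).2 v v = (η' j).2 v v := by
  let F (b : Bool) : ∀ j, Param (G.compV (rep j)) R := cond b η η'
  have hF (b : Bool) (j : ι) : F b j ∈ (t.component (rep j)).paramSpace P := by
    cases b
    exacts [hη' j, hη j]
  let B := AlgHom.equalizer (Pi.evalAlgHom R (fun _ : Bool => R) true)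
    (Pi.evalAlgHom R (fun _ : Bool => R) false)
  have : IsLocalHom B.val := isLocalHom_val_equalizer _ _
  have hmem {W : Type _} [Fintype W] [DecidableEq W] {H : MixedGraph W} {o : H.TopologicalOrder}
      {E : Bool → Param W R} (hE : ∀ b, E b ∈ o.paramSpace P) :
      phi (pack E).1 (pack E).2 ∈ B.matrix ↔
        phi (E true).1 (E true).2 = phi (E false).1 (E false).2 := by
    simp only [← Matrix.ext_iff, ← phi_pack_apply hE]
    rfl
  have h := forall_phi_mem_matrix_iff (hrep := hrep) (B := B)
    fun j => pack_mem_paramSpace fun b => hF b j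
  rw [← pack_glue, hmem fun b => glue_mem_paramSpace (hF b),
    forall_congr' fun j => hmem fun b => hF b j] at h
  exact h

/-- The points of `S` with the same image under `phi` as `θ`. -/
def fiber (S : Set (Param V R)) (θ : Param V R) : Set (Param V R) :=
  {θ' ∈ S | phi θ'.1 θ'.2 = phi θ.1 θ.2}

theorem fiber_isSupported_eq {θ : Param V R}
    (hθ : θ ∈ t.paramSpace P) : fiber {θ' | G.IsSupported θ'} θ = fiber (t.paramSpace P) θ := by
  refine Set.ext fun θ' => and_congr_left fun hphi => ⟨fun hθ' => ⟨hθ', ?_⟩, And.left⟩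
  rw [← hasPivotsIn_phi_iff hθ', hphi, hasPivotsIn_phi_iff hθ.1]
  exact hθ.2

theorem variance_isUnit_and_mem {c : V} {η : Param (G.compV c) R}
    (hη : η ∈ (t.component c).paramSpace P) {v : G.compV c} (hv : v.1 ∉ G.comp c) :
    IsUnit (η.2 v v) ∧ η.2 v v ∈ P := by
  obtain ⟨hsupp, X, hX, hP⟩ := hη
  rw [← hsupp.component_pivot hX hv]
  exact ⟨hX.isUnit_pivot v, hP v⟩

theorem restrict_mem_fiber_iff {θ : Param V R} (hθ : θ ∈ t.paramSpace P)
    (hη : ∀ j, η j ∈ (t.component (rep j)).paramSpace P) :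
    (∀ j, restrict (rep j) (η j).2.diag θ ∈ fiber ((t.component (rep j)).paramSpace P) (η j)) ↔
      θ ∈ fiber (t.paramSpace P) (glue hrep η) := by
  have hmem (j : ι) : restrict (rep j) (η j).2.diag θ ∈ (t.component (rep j)).paramSpace P :=
    restrict_mem_paramSpace hθ fun _ => variance_isUnit_and_mem (hη j)
  have hvar (j : ι) (v : G.compV (rep j)) (hv : v.1 ∉ G.comp (rep j)) :
      (restrict (rep j) (η j).2.diag θ).2 v v = (η j).2 v v :=
    (restrictColumns_of_notMem hv).trans (diagonal_apply_eq _ v)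
  have h := forall_phi_eq_iff (hrep := hrep) hmem hη
  rw [glue_restrict hθ.1, and_iff_left hvar] at h
  simp only [fiber, Set.mem_ofPred_eq, hmem, hθ, true_and, h]

/-- Fibers of the parametrization of `G` are products of fibers over the mixed components. -/
noncomputable def fiberEquiv (hη : ∀ j, η j ∈ (t.component (rep j)).paramSpace P) :
    fiber (t.paramSpace P) (glue hrep η) ≃
      ∀ j, fiber ((t.component (rep j)).paramSpace P) (η j) where
  toFun θ j := ⟨restrict (rep j) (η j).2.diag θ, (restrict_mem_fiber_iff θ.2.1 hη).2 θ.2 j⟩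
  invFun ζ := ⟨glue hrep fun j => ζ j, glue_mem_paramSpace fun j => (ζ j).2.1,
    ((forall_phi_eq_iff (fun j => (ζ j).2.1) hη).1 fun j => (ζ j).2.2).1⟩
  left_inv θ := Subtype.ext (glue_restrict θ.2.1.1 _)
  right_inv ζ := by
    have hvar := ((forall_phi_eq_iff (hrep := hrep) (fun j => (ζ j).2.1) hη).1
      fun j => (ζ j).2.2).2
    exact funext fun j => Subtype.ext <|
      restrict_glue (ζ j).2.1.1 fun v hv => (hvar j v hv).symm

end Fiber

end Parametrization

section PolynomialMaps

variable {V W K : Type*}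

section Entries

variable [CommSemiring K] {A : Type*} [Semiring A] [Algebra K A] {B : Subalgebra K A}

/-- All entries of both matrices of the parameter `θ` lie in the subalgebra `B`. -/
def HasEntriesIn (B : Subalgebra K A) (θ : Param V A) : Prop :=
  (∀ u v, θ.1 u v ∈ B) ∧ ∀ u v, θ.2 u v ∈ B

end Entries

section EntriesRing

variable {R : Type*} [Fintype V] [DecidableEq V] [CommRing R] [CommRing K] [Algebra K R]
  {B : Subalgebra K R} {G : MixedGraph V} {ι : Type*} {rep : ι → V}
  {hrep : ∀ v, ∃! j, v ∈ G.comp (rep j)}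

theorem glueColumns_mem {M : ∀ j, Matrix (G.compV (rep j)) (G.compV (rep j)) R}
    (hM : ∀ j u v, v.1 ∈ G.comp (rep j) → M j u v ∈ B) (u v : V) : glueColumns hrep M u v ∈ B := by
  rw [glueColumns, of_apply]
  split_ifs
  exacts [hM _ _ _ (mem_comp_compIndex hrep v), B.zero_mem]

theorem HasEntriesIn.glue {η : ∀ j, Param (G.compV (rep j)) R}
    (hη : ∀ j, HasEntriesIn B (η j)) : HasEntriesIn B (glue hrep η) :=
  ⟨glueColumns_mem fun j u v _ => (hη j).1 u v, glueColumns_mem fun j u v _ => (hη j).2 u v⟩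

theorem restrictColumns_mem {c : V} {ω : G.compV c → R} {N : Matrix V V R}
    (hN : ∀ u v, N u v ∈ B) (hω : ∀ v, v.1 ∉ G.comp c → ω v ∈ B) (u v : G.compV c) :
    restrictColumns c ω N u v ∈ B := by
  by_cases hv : v.1 ∈ G.comp c
  · exact restrictColumns_of_mem (ω := ω) hv ▸ hN u v
  · rw [restrictColumns_of_notMem hv, diagonal_apply]
    split_ifs with huv
    exacts [huv ▸ hω v hv, B.zero_mem]

theorem HasEntriesIn.restrict {c : V} {ω : G.compV c → R} {θ : Param V R}
    (hθ : HasEntriesIn B θ) (hω : ∀ v, v.1 ∉ G.comp c → ω v ∈ B) :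
    HasEntriesIn B (restrict c ω θ) :=
  ⟨restrictColumns_mem hθ.1 fun _ _ => B.zero_mem, restrictColumns_mem hθ.2 hω⟩

theorem pack_restrict {τ : Type*} {c : V} (ω : τ → G.compV c → R) (F : τ → Param V R) :
    pack (fun s => MixedGraph.restrict c (ω s) (F s)) =
      MixedGraph.restrict c (fun v s => ω s v) (pack F) := by
  have hcolumns (ω : τ → G.compV c → R) (N : τ → Matrix V V R) :
      (.of fun u v s => restrictColumns c (ω s) (N s) u v : Matrix _ _ (τ → R)) =
        restrictColumns c (fun v s => ω s v) (.of fun u v s => N s u v) := by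
    ext u v s
    simp only [restrictColumns, of_apply, diagonal_apply]
    split_ifs <;> rfl
  exact Prod.ext (hcolumns 0 fun s => (F s).1) (hcolumns ω fun s => (F s).2)

end EntriesRing

section PolynomialFunctions

variable [CommSemiring K]

/-- The coordinates `λ_uv` (left summand) and `ω_uv` (right summand) as functions of the
parameter. -/
def coordinate (i : (V × V) ⊕ (V × V)) (θ : Param V K) : K :=
  Sum.elim (fun e => θ.1 e.1 e.2) (fun e => θ.2 e.1 e.2) i

variable (V K) in
/-- The polynomial functions of the parameter. -/
def polynomialFunctions : Subalgebra K (Param V K → K) :=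
  Algebra.adjoin K (Set.range coordinate)

theorem mem_polynomialFunctions_iff {f : Param V K → K} :
    f ∈ polynomialFunctions V K ↔
      ∃ p : MvPolynomial ((V × V) ⊕ (V × V)) K,
        ∀ θ, MvPolynomial.eval (fun i => coordinate i θ) p = f θ :=
  mem_adjoin_range_iff_exists_eval

theorem coordinate_mem_polynomialFunctions (i : (V × V) ⊕ (V × V)) :
    coordinate i ∈ polynomialFunctions V K :=
  Algebra.subset_adjoin ⟨i, rfl⟩

theorem const_mem_polynomialFunctions (a : K) :
    (fun _ => a) ∈ polynomialFunctions V K :=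
  (polynomialFunctions V K).algebraMap_mem a

/-- Maps between parameter spaces all of whose coordinates are polynomial functions. -/
def IsPolynomialMap (Φ : Param V K → Param W K) : Prop :=
  HasEntriesIn (polynomialFunctions V K) (pack Φ)

theorem isPolynomialMap_id : IsPolynomialMap (id : Param V K → Param V K) :=
  ⟨fun u v => coordinate_mem_polynomialFunctions (.inl (u, v)),
    fun u v => coordinate_mem_polynomialFunctions (.inr (u, v))⟩

theorem isPolynomialMap_const (θ : Param W K) : IsPolynomialMap fun _ : Param V K => θ :=
  ⟨fun u v => const_mem_polynomialFunctions (θ.1 u v),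
    fun u v => const_mem_polynomialFunctions (θ.2 u v)⟩

theorem IsPolynomialMap.comp_mem {Φ : Param V K → Param W K} (hΦ : IsPolynomialMap Φ)
    {f : Param W K → K} (hf : f ∈ polynomialFunctions W K) :
    (fun θ => f (Φ θ)) ∈ polynomialFunctions V K := by
  let precomp : (Param W K → K) →ₐ[K] (Param V K → K) :=
    AlgHom.pi fun θ => Pi.evalAlgHom K _ (Φ θ)
  have hle : polynomialFunctions W K ≤ (polynomialFunctions V K).comap precomp :=
    Algebra.adjoin_le <| Set.range_subset_iff.2 <|
      Sum.rec (fun e => hΦ.1 e.1 e.2) fun e => hΦ.2 e.1 e.2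
  exact hle hf

end PolynomialFunctions

section BasicOpen

variable [Field K] {S U : Set (Param V K)}

/-- `U` is a nonempty basic Zariski open subset of `S`, that is, the complement in `S` of a proper
algebraic subset. -/
def IsBasicOpen (S U : Set (Param V K)) : Prop :=
  U.Nonempty ∧ ∃ f ∈ polynomialFunctions V K, U = {θ ∈ S | f θ ≠ 0}

theorem IsBasicOpen.subset (hU : IsBasicOpen S U) : U ⊆ S := by
  obtain ⟨-, f, -, rfl⟩ := hU
  exact Set.sep_subset _ _

theorem IsBasicOpen.trans {T : Set (Param V K)} (hS : IsBasicOpen T S) (hU : IsBasicOpen S U) :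
    IsBasicOpen T U := by
  obtain ⟨-, f, hf, rfl⟩ := hS
  obtain ⟨hne, g, hg, rfl⟩ := hU
  refine ⟨hne, f * g, mul_mem hf hg, Set.ext fun θ => ?_⟩
  simp only [Set.mem_ofPred_eq, Pi.mul_apply, mul_ne_zero_iff, and_assoc]

theorem IsBasicOpen.preimage {S' U' : Set (Param W K)} (hU' : IsBasicOpen S' U')
    {Φ : Param V K → Param W K} (hΦ : IsPolynomialMap Φ) (hmaps : Set.MapsTo Φ S S')
    (hne : ∃ θ ∈ S, Φ θ ∈ U') : IsBasicOpen S {θ ∈ S | Φ θ ∈ U'} := by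
  obtain ⟨-, f, hf, rfl⟩ := hU'
  refine ⟨hne, _, hΦ.comp_mem hf, Set.ext fun θ => and_congr_right fun hθ => ?_⟩
  exact and_iff_right (hmaps hθ)

theorem isBasicOpen_sep_forall_mem {ι : Type*} [Finite ι] {U : ι → Set (Param V K)}
    (hU : ∀ j, IsBasicOpen S (U j)) (hne : ∃ θ ∈ S, ∀ j, θ ∈ U j) :
    IsBasicOpen S {θ ∈ S | ∀ j, θ ∈ U j} := by
  have := Fintype.ofFinite ι
  choose _ f hf hUf using hU
  refine ⟨hne, ∏ j, f j, prod_mem fun j _ => hf j, Set.ext fun θ => and_congr_right fun hθ => ?_⟩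
  rw [Finset.prod_apply, Finset.prod_ne_zero_iff]
  simp only [hUf, Set.mem_ofPred_eq, hθ, true_and, Finset.mem_univ, forall_const]

end BasicOpen

section Maps

variable [Fintype V] [DecidableEq V] [CommRing K] {G : MixedGraph V} {ι : Type*} {rep : ι → V}
  {hrep : ∀ v, ∃! j, v ∈ G.comp (rep j)}

theorem isPolynomialMap_restrict (c : V) (ω : G.compV c → K) :
    IsPolynomialMap (restrict (G := G) c ω) := by
  have h := isPolynomialMap_id.restrict (c := c) (ω := fun v _ => ω v)
    fun v _ => const_mem_polynomialFunctions (ω v)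
  rwa [← pack_restrict] at h

theorem isPolynomialMap_glue_update (η : ∀ j, Param (G.compV (rep j)) K) (j : ι) :
    IsPolynomialMap fun a => glue hrep (Function.update η j a) := by
  rw [IsPolynomialMap, pack_glue]
  refine HasEntriesIn.glue fun i => ?_
  rcases eq_or_ne i j with rfl | hij
  · simp only [Function.update_self]
    exact isPolynomialMap_id
  · simp only [Function.update_of_ne hij]
    exact isPolynomialMap_const (η i)

end Maps

end PolynomialMaps

section GenericFibers

variable {V K : Type*} [Fintype V] [DecidableEq V] [Field K] {G : MixedGraph V}
  {t : G.TopologicalOrder} {P : Set K} {ι : Type*} {rep : ι → V}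
  {hrep : ∀ v, ∃! j, v ∈ G.comp (rep j)}

section Generic

theorem exists_glue_mem (hP : 1 ∈ P) {U : Set (Param V K)} (hU : IsBasicOpen (t.paramSpace P) U) :
    ∃ η : ∀ j, Param (G.compV (rep j)) K,
      (∀ j, η j ∈ (t.component (rep j)).paramSpace P) ∧ glue hrep η ∈ U := by
  obtain ⟨θ, hθ⟩ := hU.1
  have hsupp := hU.subset hθ
  refine ⟨fun j => restrict (rep j) 1 θ, fun j => ?_, ?_⟩
  · exact restrict_mem_paramSpace hsupp fun _ _ => ⟨isUnit_one, hP⟩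
  · rwa [glue_restrict hsupp.1 fun _ => 1]

theorem isBasicOpen_glue_update_mem {U : Set (Param V K)} (hU : IsBasicOpen (t.paramSpace P) U)
    {η : ∀ j, Param (G.compV (rep j)) K} (hη : ∀ j, η j ∈ (t.component (rep j)).paramSpace P)
    (hηU : glue hrep η ∈ U) (j : ι) :
    IsBasicOpen ((t.component (rep j)).paramSpace P)
      {a ∈ (t.component (rep j)).paramSpace P | glue hrep (Function.update η j a) ∈ U} :=
  hU.preimage (isPolynomialMap_glue_update η j)
    (fun _ ha => glue_mem_paramSpace (update_mem_paramSpace hη ha))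
    ⟨η j, hη j, by rwa [Function.update_eq_self]⟩

theorem isBasicOpen_restrict_mem (hrep : ∀ v, ∃! j, v ∈ G.comp (rep j))
    {j : ι} {U : Set (Param (G.compV (rep j)) K)}
    (hU : IsBasicOpen ((t.component (rep j)).paramSpace P) U)
    {η : ∀ j, Param (G.compV (rep j)) K} (hη : ∀ j, η j ∈ (t.component (rep j)).paramSpace P)
    (hηU : η j ∈ U) :
    IsBasicOpen (t.paramSpace P) {θ ∈ t.paramSpace P | restrict (rep j) (η j).2.diag θ ∈ U} := by
  refine hU.preimage (isPolynomialMap_restrict (rep j) _)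
    (fun θ hθ => restrict_mem_paramSpace hθ fun _ => variance_isUnit_and_mem (hη j))
    ⟨_, glue_mem_paramSpace (hrep := hrep) hη, ?_⟩
  rwa [restrict_glue (ω := (η j).2.diag) (hη j).1 fun _ _ => rfl]

theorem exists_isBasicOpen_forall_restrict_mem [Finite ι]
    (hrep : ∀ v, ∃! j, v ∈ G.comp (rep j))
    {U : ∀ j, Set (Param (G.compV (rep j)) K)}
    (hU : ∀ j, IsBasicOpen ((t.component (rep j)).paramSpace P) (U j)) :
    ∃ (ω : ∀ j, G.compV (rep j) → K) (W : Set (Param V K)), IsBasicOpen (t.paramSpace P) W ∧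
      ∀ θ ∈ W, ∀ j, restrict (rep j) (ω j) θ ∈ U j := by
  choose η hηU using fun j => (hU j).1
  have hη (j : ι) := (hU j).subset (hηU j)
  refine ⟨fun j => (η j).2.diag, _, isBasicOpen_sep_forall_mem
    (fun j => isBasicOpen_restrict_mem hrep (hU j) hη (hηU j)) ⟨glue hrep η, glue_mem_paramSpace hη,
      fun j => ⟨glue_mem_paramSpace hη, ?_⟩⟩,
    fun θ hθ j => (hθ.2 j).2⟩
  rw [restrict_glue (ω := (η j).2.diag) (hη j).1 fun _ _ => rfl]
  exact hηU j

end Generic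

section Injective

theorem exists_injOn_phi_of_forall_component [Finite ι]
    (hrep : ∀ v, ∃! j, v ∈ G.comp (rep j))
    (h : ∀ j, ∃ U, IsBasicOpen ((t.component (rep j)).paramSpace P) U ∧
      Set.InjOn (fun η => phi η.1 η.2) U) :
    ∃ U, IsBasicOpen (t.paramSpace P) U ∧ Set.InjOn (fun θ => phi θ.1 θ.2) U := by
  choose U hU hinj using h
  obtain ⟨ω, W, hW, hWU⟩ := exists_isBasicOpen_forall_restrict_mem hrep hU
  refine ⟨W, hW, fun θ hθ θ' hθ' heq => ?_⟩
  have hsupp {θ} (hθ : θ ∈ W) := (hW.subset hθ).1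
  have hphi := (forall_phi_eq_iff (hrep := hrep) (fun j => (hU j).subset (hWU θ hθ j))
    fun j => (hU j).subset (hWU θ' hθ' j)).2 (by
      rw [glue_restrict (hsupp hθ), glue_restrict (hsupp hθ')]
      refine ⟨heq, fun j v hv => ?_⟩
      exact (restrictColumns_of_notMem hv).trans (restrictColumns_of_notMem hv).symm)
  rw [← glue_restrict (hrep := hrep) (hsupp hθ) ω, ← glue_restrict (hrep := hrep) (hsupp hθ') ω]
  exact congrArg _ (funext fun j => hinj j (hWU θ hθ j) (hWU θ' hθ' j) (hphi j))

theorem exists_injOn_phi_component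
    (hrep : ∀ v, ∃! j, v ∈ G.comp (rep j)) (hP : 1 ∈ P)
    (h : ∃ U, IsBasicOpen (t.paramSpace P) U ∧ Set.InjOn (fun θ => phi θ.1 θ.2) U) (j : ι) :
    ∃ U, IsBasicOpen ((t.component (rep j)).paramSpace P) U ∧
      Set.InjOn (fun η => phi η.1 η.2) U := by
  obtain ⟨U, hU, hinj⟩ := h
  obtain ⟨η, hη, hηU⟩ := exists_glue_mem (hrep := hrep) hP hU
  refine ⟨_, isBasicOpen_glue_update_mem hU hη hηU j, fun a ⟨ha, haU⟩ b ⟨hb, hbU⟩ heq => ?_⟩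
  obtain ⟨hglue, hvar⟩ := (forall_phi_eq_iff (hrep := hrep) (update_mem_paramSpace hη ha)
    (update_mem_paramSpace hη hb)).1 fun i => by
      rcases eq_or_ne i j with rfl | hij
      · simpa only [Function.update_self] using heq
      · simp only [Function.update_of_ne hij]
  simpa only [Function.update_self] using eq_of_glue_eq (hinj haU hbU hglue) (j := j)
    (update_mem_paramSpace hη ha j).1 (update_mem_paramSpace hη hb j).1 (hvar j)

end Injective

section Cardinality

theorem exists_fiber_infinite_of_component (hrep : ∀ v, ∃! j, v ∈ G.comp (rep j)) (hP : 1 ∈ P)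
    {j : ι} (h : ∃ U, IsBasicOpen ((t.component (rep j)).paramSpace P) U ∧
      ∀ a ∈ U, (fiber ((t.component (rep j)).paramSpace P) a).Infinite) :
    ∃ U, IsBasicOpen (t.paramSpace P) U ∧ ∀ θ ∈ U, (fiber (t.paramSpace P) θ).Infinite := by
  obtain ⟨U, hU, hinf⟩ := h
  obtain ⟨a, ha⟩ := hU.1
  obtain ⟨η, hη, hηU⟩ : ∃ η : ∀ i, Param (G.compV (rep i)) K,
      (∀ i, η i ∈ (t.component (rep i)).paramSpace P) ∧ η j ∈ U :=
    ⟨Function.update (fun _ => (0, 1)) j a,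
      update_mem_paramSpace (fun _ => zero_one_mem_paramSpace hP) (hU.subset ha),
      by rwa [Function.update_self]⟩
  refine ⟨_, isBasicOpen_restrict_mem hrep hU hη hηU, fun θ ⟨hθ, hθU⟩ => ?_⟩
  have hrestrict (i : ι) := restrict_mem_paramSpace (ω := (η i).2.diag) hθ fun _ =>
    variance_isUnit_and_mem (hη i)
  have e := fiberEquiv (hrep := hrep) hrestrict
  rw [glue_restrict hθ.1] at e
  rw [← Set.infinite_coe_iff, e.infinite_iff]
  have (i : ι) : Nonempty (fiber ((t.component (rep i)).paramSpace P)
      (restrict (rep i) (η i).2.diag θ)) := ⟨_, hrestrict i, rfl⟩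
  have := (hinf _ hθU).to_subtype
  exact Pi.infinite_of_exists_right j

theorem exists_component_fiber_infinite [Finite ι] (hrep : ∀ v, ∃! j, v ∈ G.comp (rep j))
    (hP : 1 ∈ P)
    (h : ∃ U, IsBasicOpen (t.paramSpace P) U ∧ ∀ θ ∈ U, (fiber (t.paramSpace P) θ).Infinite) :
    ∃ j, ∃ U, IsBasicOpen ((t.component (rep j)).paramSpace P) U ∧
      ∀ a ∈ U, (fiber ((t.component (rep j)).paramSpace P) a).Infinite := by
  have := Fintype.ofFinite ι
  obtain ⟨U, hU, hinf⟩ := h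
  by_contra! hfin
  -- Move the components of `η` one at a time into finite fibers, staying inside `U`.
  have hreplace (s : Finset ι) : ∃ η : ∀ j, Param (G.compV (rep j)) K,
      (∀ j, η j ∈ (t.component (rep j)).paramSpace P) ∧ glue hrep η ∈ U ∧
        ∀ j ∈ s, (fiber ((t.component (rep j)).paramSpace P) (η j)).Finite := by
    induction s using Finset.induction_on with
    | empty =>
      obtain ⟨η, hη, hηU⟩ := exists_glue_mem (hrep := hrep) hP hU
      exact ⟨η, hη, hηU, fun _ h => absurd h (Finset.notMem_empty _)⟩
    | insert j s _ ih =>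
      obtain ⟨η, hη, hηU, hs⟩ := ih
      obtain ⟨a, ⟨ha, haU⟩, hafin⟩ := hfin j _ (isBasicOpen_glue_update_mem hU hη hηU j)
      refine ⟨_, update_mem_paramSpace hη ha, haU, fun i hi => ?_⟩
      rcases eq_or_ne i j with rfl | hij
      · simpa only [Function.update_self, Set.not_infinite] using hafin
      · simpa only [Function.update_of_ne hij] using hs i (Finset.mem_of_mem_insert_of_ne hi hij)
  obtain ⟨η, hη, hηU, hs⟩ := hreplace Finset.univ
  have (j : ι) := (hs j (Finset.mem_univ j)).to_subtype
  exact hinf _ hηU (Set.finite_coe_iff.1 (Finite.of_equiv _ (fiberEquiv hη).symm))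

theorem exists_card_fiber_eq_prod [Fintype ι] (hrep : ∀ v, ∃! j, v ∈ G.comp (rep j)) {n : ι → ℕ}
    (h : ∀ j, ∃ U, IsBasicOpen ((t.component (rep j)).paramSpace P) U ∧ ∀ a ∈ U,
      (fiber ((t.component (rep j)).paramSpace P) a).Finite ∧
        Nat.card (fiber ((t.component (rep j)).paramSpace P) a) = n j) :
    ∃ U, IsBasicOpen (t.paramSpace P) U ∧ ∀ θ ∈ U,
      (fiber (t.paramSpace P) θ).Finite ∧ Nat.card (fiber (t.paramSpace P) θ) = ∏ j, n j := by
  choose U hU hcard using h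
  obtain ⟨ω, W, hW, hWU⟩ := exists_isBasicOpen_forall_restrict_mem hrep hU
  refine ⟨W, hW, fun θ hθ => ?_⟩
  have e := fiberEquiv (hrep := hrep) fun j => (hU j).subset (hWU θ hθ j)
  rw [glue_restrict (hW.subset hθ).1] at e
  have (j : ι) := (hcard j _ (hWU θ hθ j)).1.to_subtype
  refine ⟨Set.finite_coe_iff.1 (Finite.of_equiv _ e.symm), ?_⟩
  rw [Nat.card_congr e, Nat.card_pi]
  exact Finset.prod_congr rfl fun j _ => (hcard j _ (hWU θ hθ j)).2

end Cardinality

end GenericFibers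

section RationalFunctions

variable {V K A : Type*} [CommRing A]

variable (K) in
/-- The elements of the `K`-algebra `A` that are rational functions of the entries of `N`. -/
def rationalFunctions [CommRing K] [Algebra K A] (N : Matrix V V A) : Subalgebra K A :=
  unitFractions (Algebra.adjoin K (Set.range fun e : V × V => N e.1 e.2))

theorem mem_rationalFunctions [CommRing K] [Algebra K A] (N : Matrix V V A) (u v : V) :
    N u v ∈ rationalFunctions K N :=
  le_unitFractions (Algebra.subset_adjoin ⟨(u, v), rfl⟩)

theorem rationalFunctions_le [CommRing K] [Algebra K A] {N : Matrix V V A} {C : Subalgebra K A}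
    [IsLocalHom C.val] (hN : ∀ u v, N u v ∈ C) : rationalFunctions K N ≤ C :=
  unitFractions_le (Algebra.adjoin_le (Set.range_subset_iff.2 fun e => hN e.1 e.2))

theorem mem_rationalFunctions_iff [Field K] {τ : Type*} {N : Matrix V V (τ → K)} {f : τ → K} :
    f ∈ rationalFunctions K N ↔ ∃ p q : MvPolynomial (V × V) K, ∀ s,
      MvPolynomial.eval (fun e => N e.1 e.2 s) q ≠ 0 ∧
        f s * MvPolynomial.eval (fun e => N e.1 e.2 s) q =
          MvPolynomial.eval (fun e => N e.1 e.2 s) p := by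
  simp only [rationalFunctions, mem_unitFractions, mem_adjoin_range_iff_exists_eval,
    Pi.isUnit_iff, isUnit_iff_ne_zero, Pi.mul_apply]
  constructor
  · rintro ⟨g, ⟨q, hq⟩, hunit, p, hp⟩
    exact ⟨p, q, fun s => ⟨hq s ▸ hunit s, by rw [hq, hp]⟩⟩
  · rintro ⟨p, q, h⟩
    exact ⟨_, ⟨q, fun _ => rfl⟩, fun s => (h s).1, p, fun s => (h s).2.symm⟩

end RationalFunctions

section RationalInverse

variable {V K : Type*} [Fintype V] [DecidableEq V] [Field K] {G : MixedGraph V}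
  {t : G.TopologicalOrder} {P : Set K} {ι : Type*} {rep : ι → V}

/-- The functions on `U` that are rational in the entries of the image under `phi`. -/
noncomputable def rationalInPhi (U : Set (Param V K)) : Subalgebra K (U → K) :=
  rationalFunctions K (phi (pack Subtype.val).1 (pack Subtype.val).2)

instance isLocalHom_val_rationalInPhi (U : Set (Param V K)) : IsLocalHom (rationalInPhi U).val :=
  isLocalHom_val_unitFractions

/-- On `U` the parameter is a rational function of its image under `phi`. -/
def HasRationalInverseOn (U : Set (Param V K)) : Prop :=
  HasEntriesIn (rationalInPhi U) (pack Subtype.val)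

theorem phi_mem_rationalInPhi (U : Set (Param V K)) :
    phi (pack (Subtype.val : U → _)).1 (pack Subtype.val).2 ∈ (rationalInPhi U).matrix :=
  mem_rationalFunctions _

theorem HasRationalInverseOn.hasEntriesIn {U : Set (Param V K)} (h : HasRationalInverseOn U)
    (hU : U ⊆ t.paramSpace P) {τ : Type*} {F : τ → Param V K} (hF : ∀ s, F s ∈ U)
    {B : Subalgebra K (τ → K)} [IsLocalHom B.val] (hB : phi (pack F).1 (pack F).2 ∈ B.matrix) :
    HasEntriesIn B (pack F) := by
  let precomp : (U → K) →ₐ[K] (τ → K) := AlgHom.pi fun s => Pi.evalAlgHom K _ ⟨F s, hF s⟩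
  have : IsLocalHom (B.comap precomp).val := isLocalHom_val_comap precomp
  have hle : rationalInPhi U ≤ B.comap precomp := by
    refine rationalFunctions_le fun u v => ?_
    have hphi : precomp (phi (pack Subtype.val).1 (pack Subtype.val).2 u v) =
        phi (pack F).1 (pack F).2 u v := funext fun s =>
      (phi_pack_apply (fun θ : U => hU θ.2) u v ⟨F s, hF s⟩).trans
        (phi_pack_apply (fun s => hU (hF s)) u v s).symm
    rw [Subalgebra.mem_comap, hphi]
    exact hB u v
  exact ⟨fun u v => hle (h.1 u v), fun u v => hle (h.2 u v)⟩

theorem exists_hasRationalInverseOn_of_forall_component [Finite ι]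
    (hrep : ∀ v, ∃! j, v ∈ G.comp (rep j))
    (h : ∀ j, ∃ U, IsBasicOpen ((t.component (rep j)).paramSpace P) U ∧ HasRationalInverseOn U) :
    ∃ U, IsBasicOpen (t.paramSpace P) U ∧ HasRationalInverseOn U := by
  choose U hU hinv using h
  obtain ⟨ω, W, hW, hWU⟩ := exists_isBasicOpen_forall_restrict_mem hrep hU
  refine ⟨W, hW, ?_⟩
  let F (θ : W) (j : ι) : Param (G.compV (rep j)) K := restrict (rep j) (ω j) θ
  have hF (j : ι) (θ : W) : F θ j ∈ U j := hWU θ θ.2 j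
  have hglue : glue hrep (fun j => pack fun θ => F θ j) = pack Subtype.val := by
    rw [← pack_glue]
    exact congrArg pack (funext fun θ => glue_restrict (hW.subset θ.2).1 ω)
  have hvar (j : ι) (v : G.compV (rep j)) (hv : v.1 ∉ G.comp (rep j)) :
      (pack fun θ => F θ j).2 v v ∈ rationalInPhi W := by
    have hconst : (pack fun θ => F θ j).2 v v = algebraMap K (W → K) (ω j v) :=
      funext fun θ => (restrictColumns_of_notMem hv).trans (diagonal_apply_eq _ v)
    exact hconst ▸ (rationalInPhi W).algebraMap_mem _
  have hphi := (forall_phi_mem_matrix_iff (hrep := hrep) (B := rationalInPhi W)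
    fun j => pack_mem_paramSpace fun θ => (hU j).subset (hF j θ)).2
      ⟨hglue ▸ phi_mem_rationalInPhi W, hvar⟩
  rw [HasRationalInverseOn, ← hglue]
  exact HasEntriesIn.glue fun j => (hinv j).hasEntriesIn (hU j).subset (hF j) (hphi j)

theorem exists_hasRationalInverseOn_component (hrep : ∀ v, ∃! j, v ∈ G.comp (rep j))
    (hP : 1 ∈ P) (h : ∃ U, IsBasicOpen (t.paramSpace P) U ∧ HasRationalInverseOn U) (j : ι) :
    ∃ U, IsBasicOpen ((t.component (rep j)).paramSpace P) U ∧ HasRationalInverseOn U := by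
  obtain ⟨U, hU, hinv⟩ := h
  obtain ⟨η, hη, hηU⟩ := exists_glue_mem (hrep := hrep) hP hU
  have hW := isBasicOpen_glue_update_mem hU hη hηU j
  set W := {a ∈ (t.component (rep j)).paramSpace P | glue hrep (Function.update η j a) ∈ U}
  refine ⟨W, hW, ?_⟩
  let F (a : W) : ∀ i, Param (G.compV (rep i)) K := Function.update η j a
  have hF (i : ι) (a : W) : F a i ∈ (t.component (rep i)).paramSpace P :=
    update_mem_paramSpace hη a.2.1 i
  have hphi (i : ι) : phi (pack fun a => F a i).1 (pack fun a => F a i).2 ∈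
      (rationalInPhi W).matrix := by
    rcases eq_or_ne i j with rfl | hij
    · simp only [F, Function.update_self]
      exact phi_mem_rationalInPhi W
    · intro u v
      have hconst : phi (pack fun a => F a i).1 (pack fun a => F a i).2 u v =
          algebraMap K (W → K) (phi (η i).1 (η i).2 u v) := funext fun a => by
        have hFi : F a i = η i := Function.update_of_ne hij ..
        rw [phi_pack_apply (hF i), hFi]
        rfl
      exact hconst ▸ (rationalInPhi W).algebraMap_mem _
  obtain ⟨hglue, hvar⟩ := (forall_phi_mem_matrix_iff (hrep := hrep)
    fun i => pack_mem_paramSpace (hF i)).1 hphi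
  rw [← pack_glue] at hglue
  have hrestrict (a : W) : restrict (rep j) (F a j).2.diag (glue hrep (F a)) = a := by
    rw [restrict_glue (ω := (F a j).2.diag) (hF j a).1 fun _ _ => rfl]
    exact Function.update_self ..
  rw [HasRationalInverseOn, ← funext hrestrict, pack_restrict]
  exact (hinv.hasEntriesIn hU.subset (fun a : W => a.2.2) hglue).restrict (hvar j)

end RationalInverse

section RealIdentifiability

variable {V : Type*} [Fintype V] [DecidableEq V] {G : MixedGraph V}

theorem exists_isProperAlgebraic_iff {Q : Set (Param V ℝ) → Prop} :
    (∃ V₀, G.IsProperAlgebraic V₀ ∧ Q (G.Theta \ V₀)) ↔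
      ∃ U, IsBasicOpen G.Theta U ∧ Q U := by
  have hdiff (f : Param V ℝ → ℝ) :
      G.Theta \ {θ ∈ G.Theta | f θ = 0} = {θ ∈ G.Theta | f θ ≠ 0} :=
    Set.ext fun θ => and_congr_right fun hθ => not_congr (and_iff_right hθ)
  constructor
  · rintro ⟨_, ⟨p, hne, rfl⟩, hQ⟩
    exact ⟨{θ ∈ G.Theta | evalParam θ p ≠ 0}, ⟨hne, fun θ => evalParam θ p,
      mem_polynomialFunctions_iff.2 ⟨p, fun _ => rfl⟩, rfl⟩, hdiff (evalParam · p) ▸ hQ⟩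
  · rintro ⟨_, ⟨hne, f, hf, rfl⟩, hQ⟩
    obtain ⟨p, hp⟩ := mem_polynomialFunctions_iff.1 hf
    obtain rfl : (fun θ => evalParam θ p) = f := funext hp
    exact ⟨_, ⟨p, hne, rfl⟩, (hdiff _).symm ▸ hQ⟩

theorem TopologicalOrder.genericallyIdentifiable_iff (t : G.TopologicalOrder) :
    G.GenericallyIdentifiable ↔ ∃ U, IsBasicOpen (t.paramSpace (Set.Ioi (0 : ℝ))) U ∧
      Set.InjOn (fun θ => phi θ.1 θ.2) U := by
  rw [← theta_eq_paramSpace]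
  exact exists_isProperAlgebraic_iff

theorem TopologicalOrder.genInfiniteToOne_iff (t : G.TopologicalOrder) :
    G.GenInfiniteToOne ↔ ∃ U, IsBasicOpen (t.paramSpace (Set.Ioi (0 : ℝ))) U ∧
      ∀ θ ∈ U, (fiber (t.paramSpace (Set.Ioi (0 : ℝ))) θ).Infinite := by
  rw [← theta_eq_paramSpace]
  exact exists_isProperAlgebraic_iff
    (Q := fun U => ∀ θ ∈ U, (fiber G.Theta θ).Infinite)

theorem hasRationalInverseOn_iff {t : G.TopologicalOrder} {P : Set ℝ} {U : Set (Param V ℝ)}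
    (hU : U ⊆ t.paramSpace P) :
    HasRationalInverseOn U ↔ ∃ p q : (V × V) ⊕ (V × V) → MvPolynomial (V × V) ℝ, ∀ θ ∈ U,
      (∀ i, evalAtCov (phi θ.1 θ.2) (q i) ≠ 0) ∧
        (∀ u v, θ.1 u v * evalAtCov (phi θ.1 θ.2) (q (.inl (u, v))) =
          evalAtCov (phi θ.1 θ.2) (p (.inl (u, v)))) ∧
        ∀ u v, θ.2 u v * evalAtCov (phi θ.1 θ.2) (q (.inr (u, v))) =
          evalAtCov (phi θ.1 θ.2) (p (.inr (u, v))) := by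
  have hcoordinate : HasRationalInverseOn U ↔
      ∀ i, (fun θ : U => coordinate i θ.1) ∈ rationalInPhi U := by
    rw [Sum.forall, Prod.forall, Prod.forall]
    rfl
  have hphi (u v : V) (θ : U) : phi (pack Subtype.val).1 (pack Subtype.val).2 u v θ =
      phi θ.1.1 θ.1.2 u v := phi_pack_apply (fun θ : U => hU θ.2) u v θ
  simp only [hcoordinate, rationalInPhi, mem_rationalFunctions_iff, hphi, Classical.skolem]
  refine exists₂_congr fun p q => ?_
  rw [forall_comm, Subtype.forall]
  refine forall₂_congr fun θ _ => forall_and.trans (and_congr_right fun _ => ?_)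
  rw [Sum.forall, Prod.forall, Prod.forall]
  rfl

theorem TopologicalOrder.rationallyIdentifiable_iff (t : G.TopologicalOrder) :
    G.RationallyIdentifiable ↔ ∃ U, IsBasicOpen (t.paramSpace (Set.Ioi (0 : ℝ))) U ∧
      HasRationalInverseOn U := by
  rw [← theta_eq_paramSpace]
  refine Iff.symm ((exists_congr fun U => and_congr_right fun hU =>
    hasRationalInverseOn_iff (theta_eq_paramSpace t ▸ hU.subset)).trans ?_)
  exact (exists_isProperAlgebraic_iff (G := G)).symm

end RealIdentifiability

section Supported

variable {V K : Type*} [Field K]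

theorem exists_polynomial_eval_eq_lineMap {f : Param V K → K} (hf : f ∈ polynomialFunctions V K)
    (θ₁ θ₂ : Param V K) :
    ∃ q : Polynomial K, ∀ x, q.eval x = f (AffineMap.lineMap θ₁ θ₂ x) := by
  let precomp : (Param V K → K) →ₐ[K] (K → K) :=
    AlgHom.pi fun x => Pi.evalAlgHom K _ (AffineMap.lineMap θ₁ θ₂ x)
  have hcoordinate (i : (V × V) ⊕ (V × V)) (x : K) : coordinate i (AffineMap.lineMap θ₁ θ₂ x) =
      (coordinate i θ₂ - coordinate i θ₁) * x + coordinate i θ₁ := by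
    rw [AffineMap.lineMap_apply_module']
    rcases i with e | e <;>
      exact congrArg (· + _) (mul_comm x _)
  have hle : polynomialFunctions V K ≤
      (Polynomial.aeval (id : K → K)).range.comap precomp := by
    refine Algebra.adjoin_le <| Set.range_subset_iff.2 fun i =>
      ⟨.C (coordinate i θ₂ - coordinate i θ₁) * .X + .C (coordinate i θ₁), funext fun x => ?_⟩
    refine (Polynomial.aeval_fn_apply _ id x).trans ?_
    rw [map_add, map_mul, Polynomial.aeval_X, Polynomial.aeval_C, Polynomial.aeval_C]
    exact (hcoordinate i x).symm
  obtain ⟨q, hq⟩ := hle hf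
  refine ⟨q, fun x => ?_⟩
  rw [← Polynomial.coe_aeval_eq_eval]
  exact (Polynomial.aeval_fn_apply q id x).symm.trans (congrFun hq x)

theorem IsBasicOpen.exists_mem_inter [Infinite K] {S U₁ U₂ : Set (Param V K)}
    (hS : ∀ θ₁ ∈ S, ∀ θ₂ ∈ S, ∀ x : K, AffineMap.lineMap θ₁ θ₂ x ∈ S) (h₁ : IsBasicOpen S U₁)
    (h₂ : IsBasicOpen S U₂) : (U₁ ∩ U₂).Nonempty := by
  obtain ⟨⟨θ₁, hθ₁⟩, f, hf, rfl⟩ := h₁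
  obtain ⟨⟨θ₂, hθ₂⟩, g, hg, rfl⟩ := h₂
  obtain ⟨p, hp⟩ := exists_polynomial_eval_eq_lineMap hf θ₁ θ₂
  obtain ⟨q, hq⟩ := exists_polynomial_eval_eq_lineMap hg θ₁ θ₂
  have hp0 : p ≠ 0 := by
    rintro rfl
    exact hθ₁.2 (by simpa using (hp 0).symm)
  have hq0 : q ≠ 0 := by
    rintro rfl
    exact hθ₂.2 (by simpa using (hq 1).symm)
  obtain ⟨x, hx⟩ : ∃ x, (p * q).eval x ≠ 0 := by
    by_contra! hzero
    exact mul_ne_zero hp0 hq0 (Polynomial.funext fun x => (hzero x).trans Polynomial.eval_zero.symm)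
  rw [Polynomial.eval_mul, hp, hq, mul_ne_zero_iff] at hx
  have hmem := hS θ₁ hθ₁.1 θ₂ hθ₂.1 x
  exact ⟨_, ⟨hmem, hx.1⟩, hmem, hx.2⟩

end Supported

section ComplexParametrization

variable {V K : Type*} [Fintype V] [DecidableEq V] [Field K] {G : MixedGraph V}

theorem isBasicOpen_paramSpace_univ (t : G.TopologicalOrder) :
    IsBasicOpen {θ : Param V K | G.IsSupported θ} (t.paramSpace Set.univ) := by
  refine ⟨⟨_, zero_one_mem_paramSpace (Set.mem_univ _)⟩,
    fun θ => ∏ v, leadingMinor t.rank θ.2 v, ?_, Set.ext fun θ => and_congr_right fun _ => ?_⟩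
  · have hprod : (fun θ => ∏ v, leadingMinor t.rank θ.2 v) =
        ∏ v, leadingMinor t.rank (pack (id : Param V K → _)).2 v := by
      ext θ
      rw [Finset.prod_apply]
      exact Finset.prod_congr rfl fun v _ =>
        leadingMinor_map (Pi.evalRingHom (fun _ => K) θ) (pack (id : Param V K → _)).2 v
    have hmem : (pack (id : Param V K → _)).2 ∈ (polynomialFunctions V K).matrix :=
      isPolynomialMap_id.2
    exact hprod ▸ prod_mem fun v _ => leadingMinor_mem hmem v
  · simp only [hasPivotsIn_univ_iff, isUnit_iff_ne_zero, Finset.prod_ne_zero_iff, Finset.mem_univ,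
      forall_const]

theorem TopologicalOrder.genHToOneC_iff (t : G.TopologicalOrder) (h : ℕ) :
    G.GenHToOneC h ↔ ∃ U, IsBasicOpen (t.paramSpace (Set.univ : Set ℂ)) U ∧ ∀ θ ∈ U,
      (fiber (t.paramSpace Set.univ) θ).Finite ∧
        Nat.card (fiber (t.paramSpace Set.univ) θ) = h := by
  have hThetaC : G.ThetaC = {θ | G.IsSupported θ} := Set.ext fun _ => mem_thetaC_iff t
  have hopen := isBasicOpen_paramSpace_univ (K := ℂ) t
  constructor
  · rintro ⟨p, hne, hp⟩
    rw [hThetaC] at hne hp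
    have hU : IsBasicOpen {θ | G.IsSupported θ} {θ | G.IsSupported θ ∧ evalParamC θ p ≠ 0} :=
      ⟨hne, fun θ => evalParamC θ p, mem_polynomialFunctions_iff.2 ⟨p, fun _ => rfl⟩, rfl⟩
    obtain ⟨θ₀, hU₀, hθ₀⟩ := hU.exists_mem_inter (fun _ h₁ _ h₂ => h₁.lineMap h₂) hopen
    refine ⟨_, hU.preimage isPolynomialMap_id hopen.subset ⟨θ₀, hθ₀, hU₀⟩, fun θ hθ => ?_⟩
    exact fiber_isSupported_eq hθ.1 ▸ hp θ hθ.2.1 hθ.2.2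
  · rintro ⟨U, hU, hfib⟩
    obtain ⟨hne, f, hf, hUf⟩ := hopen.trans hU
    obtain ⟨p, hp⟩ := mem_polynomialFunctions_iff.1 hf
    obtain rfl : (fun θ => evalParamC θ p) = f := funext hp
    rw [GenHToOneC, hThetaC]
    subst hUf
    refine ⟨p, hne, fun θ hθ hp => ?_⟩
    have hcard := hfib θ ⟨hθ, hp⟩
    rwa [← fiber_isSupported_eq (hU.subset ⟨hθ, hp⟩)] at hcard

end ComplexParametrization

end MixedGraph

/-- Decomposition of an acyclic mixed graph into its mixed components `G_1, …, G_k`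
(here enumerated by representatives `rep j` of the bidirected connected components):
(i) `G` is rationally (resp. generically) identifiable iff all components are;
(ii) `φ_G` is generically infinite-to-one iff some `φ_{G_j}` is;
(iii) if each complex `φ_{G_j,ℂ}` is generically `h_j`-to-one with `h_j < ∞`, then
`φ_{G,ℂ}` is generically `∏ h_j`-to-one. -/
theorem mixed_component_decomposition {V : Type*} [Fintype V] [DecidableEq V]
    (G : MixedGraph V) (hacyclic : G.Acyclic)
    (k : ℕ) (rep : Fin k → V) (hrep : ∀ v : V, ∃! j : Fin k, v ∈ G.comp (rep j)) :
    (G.RationallyIdentifiable ↔ ∀ j, (G.component (rep j)).RationallyIdentifiable) ∧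
    (G.GenericallyIdentifiable ↔ ∀ j, (G.component (rep j)).GenericallyIdentifiable) ∧
    (G.GenInfiniteToOne ↔ ∃ j, (G.component (rep j)).GenInfiniteToOne) ∧
    (∀ h : Fin k → ℕ, (∀ j, (G.component (rep j)).GenHToOneC (h j)) →
      G.GenHToOneC (∏ j, h j)) := by
  obtain ⟨t⟩ := hacyclic.nonempty_topologicalOrder
  have hone : (1 : ℝ) ∈ Set.Ioi (0 : ℝ) := Set.mem_Ioi.2 one_pos
  simp only [t.rationallyIdentifiable_iff, t.genericallyIdentifiable_iff,
    t.genInfiniteToOne_iff, t.genHToOneC_iff,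
    fun j => (t.component (rep j)).rationallyIdentifiable_iff,
    fun j => (t.component (rep j)).genericallyIdentifiable_iff,
    fun j => (t.component (rep j)).genInfiniteToOne_iff,
    fun j => (t.component (rep j)).genHToOneC_iff]
  exact ⟨⟨MixedGraph.exists_hasRationalInverseOn_component hrep hone,
      MixedGraph.exists_hasRationalInverseOn_of_forall_component hrep⟩,
    ⟨MixedGraph.exists_injOn_phi_component hrep hone,
      MixedGraph.exists_injOn_phi_of_forall_component hrep⟩,
    ⟨MixedGraph.exists_component_fiber_infinite hrep hone,
      fun ⟨_, h⟩ => MixedGraph.exists_fiber_infinite_of_component hrep hone h⟩,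
    fun _ => MixedGraph.exists_card_fiber_eq_prod hrep⟩
end

section
/- Let G=(V,D,B) be a mixed graph, v∈V, and Y⊆V∖({v}∪sib(v)) with |Y|=|pa(v)|=n; write Y={y_1,…,y_n} and pa(v)={p_1,…,p_n}. For (Λ,Ω)∈Θ let Σ=φ_G(Λ,Ω) and define the n×n matrix A by A_ij=[(I−Λ)^T Σ]_{y_i p_j} if y_i∈htr(v) and A_ij=Σ_{y_i p_j} if y_i∉htr(v). If Y satisfies the half-trek criterion with respect to v, then A is generically invertible: there is a proper algebraic subset of Θ outside of which det(A)≠0 (equivalently, det(A)≠0 for at least one (Λ,Ω)∈Θ). -/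
open scoped Classical Matrix

/-!
Since `(1 - Λ)ᵀ Σ = Ω (1 - Λ)⁻¹`, the matrix `A` is a product `S Ω R`, where the rows of `S` are
unit vectors or rows of `(1 - Λ)⁻ᵀ`, and the columns of `R` are the columns of `(1 - Λ)⁻¹` indexed
by `pa(v)`. Clearing `det (1 - Λ)` makes `det (S Ω R)` polynomial in `(Λ, Ω)`, so one parameter with
nonzero determinant is enough.

Let `hᵢ` be the head of the right side of the half-trek from `yᵢ`. The right sides are disjoint, so
for a suitable `Λ` supported on them the rows of `R` at the `hᵢ` form a monomial matrix. For `Ω`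
take `W Wᵀ`, where the `i`-th column of `W` lies on the line through the unit vectors at `yᵢ` and
`hᵢ`: as `yᵢ = hᵢ` or `yᵢ ↔ hᵢ`, its off-diagonal support lies in `B`, and it is a limit of points
of `PD(B)`. Then `det (S Ω R) = det (S W) det (Wᵀ R)`. Scaling `Λ` by the same parameter `s` that
moves the columns of `W` from `yᵢ` (`s = 0`) to `hᵢ` (`s = 1`), both factors become polynomials
in `s`; the first does not vanish at `s = 0` and the second does not vanish at `s = 1`, so both are
nonzero for some `s`.
-/

lemma exists_perm_of_image_eq {ι V : Type*} [Fintype ι] [DecidableEq V]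
    {p q : ι → V} (hq : Function.Injective q)
    (hpq : Finset.univ.image q = Finset.univ.image p) :
    ∃ e : Equiv.Perm ι, ∀ i, p (e i) = q i := by
  have hmem (i : ι) : ∃ j, p j = q i := by
    simpa using hpq.subset (Finset.mem_image_of_mem q (Finset.mem_univ i))
  choose σ hσ using hmem
  have hσ_inj : Function.Injective σ := fun i j hij => hq (by rw [← hσ, ← hσ, hij])
  exact ⟨Equiv.ofBijective σ (Finite.injective_iff_bijective.1 hσ_inj), hσ⟩

section MatrixLemmas

variable {V R S : Type*} [Fintype V] [DecidableEq V]

lemma adjugate_eq_det_smul_inv [CommRing R] {M : Matrix V V R} (hM : IsUnit M.det) :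
    M.adjugate = M.det • M⁻¹ := by
  rw [Matrix.inv_def, smul_smul, Ring.mul_inverse_cancel _ hM, one_smul]

lemma map_adjugate_one_sub [CommRing R] [CommRing S] (f : R →+* S)
    (Λ : Matrix V V R) : (1 - Λ.map f).adjugate = (1 - Λ).adjugate.map f := by
  have h := f.map_adjugate (1 - Λ)
  rw [map_sub, map_one] at h
  exact h.symm

lemma map_det_one_sub [CommRing R] [CommRing S] (f : R →+* S) (Λ : Matrix V V R) :
    (1 - Λ.map f).det = f (1 - Λ).det := by
  rw [f.map_det, map_sub, map_one, RingHom.mapMatrix_apply]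

lemma det_ne_zero_of_perm [CommRing R] [IsDomain R] {M : Matrix V V R} (e : Equiv.Perm V)
    (hM : ∀ i j, M i (e j) ≠ 0 ↔ i = j) : M.det ≠ 0 := by
  have hdiag : M.submatrix id e = Matrix.diagonal fun i => M i (e i) := by
    ext i j
    obtain rfl | hij := eq_or_ne i j
    · simp
    · simpa [hij] using not_not.1 (mt (hM i j).1 hij)
  have hdet : (M.submatrix id e).det ≠ 0 := by
    rw [hdiag, Matrix.det_diagonal]
    exact Finset.prod_ne_zero_iff.2 fun i _ => (hM i i).2 rfl
  rw [Matrix.det_permute'] at hdet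
  exact right_ne_zero_of_mul hdet

end MatrixLemmas

section PolynomialMatrices

open Filter Polynomial

variable {V R : Type*} [CommRing R]

lemma map_evalRingHom_X_smul_map_C (Λ : Matrix V V R) (s : R) :
    ((X : R[X]) • Λ.map C).map (evalRingHom s) = s • Λ := by
  ext a b
  simp only [Matrix.map_apply, Matrix.smul_apply, smul_eq_mul, coe_evalRingHom, eval_mul, eval_X,
    eval_C]

variable [Fintype V] [DecidableEq V]

lemma eventually_cofinite_det_map_ne_zero [IsDomain R] (M : Matrix V V R[X]) {s : R}
    (hs : (M.map (evalRingHom s)).det ≠ 0) :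
    ∀ᶠ t in cofinite, (M.map (evalRingHom t)).det ≠ 0 := by
  have hdet (t : R) : (M.map (evalRingHom t)).det = M.det.eval t :=
    ((evalRingHom t).map_det M).symm
  simp only [hdet] at hs ⊢
  have hM : M.det ≠ 0 := fun h => hs (by rw [h, eval_zero])
  exact finite_setOfPred_isRoot hM |>.subset fun t ht => not_not.1 ht

lemma eventually_cofinite_det_one_sub_smul_ne_zero [IsDomain R] (Λ : Matrix V V R) :
    ∀ᶠ s : R in cofinite, (1 - s • Λ).det ≠ 0 := by
  let M : Matrix V V R[X] := 1 - (X : R[X]) • Λ.map C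
  have hM (s : R) : M.map (evalRingHom s) = 1 - s • Λ := by
    rw [← map_evalRingHom_X_smul_map_C, ← RingHom.mapMatrix_apply, map_sub, map_one,
      RingHom.mapMatrix_apply]
  simpa only [hM] using eventually_cofinite_det_map_ne_zero M (s := 0) (by rw [hM]; simp)

end PolynomialMatrices

section DisjointWalks

open Filter

variable {ι V K : Type*} [Fintype V] [DecidableEq V] [Field K]

lemma add_single_mulVec_add_single {R : Type*} [NonAssocSemiring R] {Λ : Matrix V V R} {a b : V}
    (hab : b ≠ a) (ha : ∀ c, Λ c a = 0) (x : V → R) (t : R) :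
    (Λ + Matrix.single a b 1) *ᵥ (x + Pi.single a t) = Λ *ᵥ x + Pi.single a (x b) := by
  have hcol : Λ *ᵥ Pi.single a t = 0 := by
    ext c
    simp [ha]
  have hupdate : Function.update (0 : V → R) a (x b) = Pi.single a (x b) := rfl
  rw [Matrix.add_mulVec, Matrix.mulVec_add, hcol, add_zero, Matrix.single_mulVec, Pi.add_apply,
    Pi.single_eq_of_ne hab, add_zero, one_mul, hupdate]

-- The scalar `s` is free so that `det (1 - s • Λ) ≠ 0` can be arranged afterwards without knowing
-- that `Λ` is nilpotent.
lemma exists_edge_matrix_of_isChain (r : V → V → Prop) :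
    ∀ {l : List V} (hl : l ≠ []), l.IsChain r →
      ∃ Λ : Matrix V V K, (∀ a b, Λ a b ≠ 0 → r a b ∧ b ∈ l) ∧
        ∀ s : K, s ≠ 0 → ∃ x : V → K, (∀ a, x a ≠ 0 ↔ a ∈ l) ∧
          x = Pi.single (l.getLast hl) 1 + s • (Λ *ᵥ x)
  | [a], _, _ => ⟨0, by simp, fun s _ => ⟨Pi.single a 1, by simp [Pi.single_apply],
      by rw [Matrix.zero_mulVec, smul_zero, add_zero, List.getLast_singleton]⟩⟩
  | a :: b :: l, _, hc => by
    obtain ⟨hab, hc⟩ := List.isChain_cons_cons.1 hc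
    obtain ⟨Λ, hΛ, hx⟩ := exists_edge_matrix_of_isChain r (List.cons_ne_nil b l) hc
    by_cases ha : a ∈ b :: l
    -- A vertex that recurs needs no new edge: the later part of the walk already reaches it.
    · have hmem (c : V) : c ∈ a :: b :: l ↔ c ∈ b :: l :=
        ⟨fun h => (List.mem_cons.1 h).elim (fun h => h ▸ ha) id, List.mem_cons_of_mem a⟩
      simp only [hmem, List.getLast_cons_cons]
      exact ⟨Λ, hΛ, hx⟩
    · refine ⟨Λ + Matrix.single a b 1, fun c d hcd => ?_, fun s hs => ?_⟩
      · by_cases h : Λ c d = 0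
        · obtain ⟨rfl, rfl⟩ : a = c ∧ b = d := by
            by_contra h'
            simp [h, h'] at hcd
          exact ⟨hab, by simp⟩
        · exact ⟨(hΛ c d h).1, List.mem_cons_of_mem a (hΛ c d h).2⟩
      · obtain ⟨x, hx, hfix⟩ := hx s hs
        have hxa : x a = 0 := not_not.1 (mt (hx a).1 ha)
        have hxb : x b ≠ 0 := (hx b).2 (by simp)
        have hab' : b ≠ a := fun h => ha (by simp [h])
        have hcol (c : V) : Λ c a = 0 := not_not.1 fun h => ha (hΛ c a h).2
        refine ⟨x + Pi.single a (s * x b), fun c => ?_, ?_⟩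
        · obtain rfl | hc := eq_or_ne c a
          · simp [hxa, hs, hxb]
          · simp [hc, hx]
        · rw [add_single_mulVec_add_single hab' hcol, List.getLast_cons_cons, smul_add, ← add_assoc,
            ← hfix, ← Pi.single_smul, smul_eq_mul]

lemma exists_edge_matrix_of_disjoint_walks [Finite ι] (r : V → V → Prop) {l : ι → List V}
    (hl : ∀ i, l i ≠ []) (hc : ∀ i, (l i).IsChain r)
    (hdisj : Pairwise (Function.onFun List.Disjoint l)) :
    ∃ Λ : Matrix V V K, (∀ a b, Λ a b ≠ 0 → r a b) ∧
      ∀ s : K, s ≠ 0 → ∀ i, ∃ x : V → K, (∀ a, x a ≠ 0 ↔ a ∈ l i) ∧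
        x = Pi.single ((l i).getLast (hl i)) 1 + s • (Λ *ᵥ x) := by
  have := Fintype.ofFinite ι
  choose Λ hΛ hx using fun i => exists_edge_matrix_of_isChain (K := K) r (hl i) (hc i)
  refine ⟨∑ i, Λ i, fun a b hab => ?_, fun s hs i => ?_⟩
  · rw [Matrix.sum_apply] at hab
    obtain ⟨i, -, hi⟩ := Finset.exists_ne_zero_of_sum_ne_zero hab
    exact (hΛ i a b hi).1
  · obtain ⟨x, hsupp, hfix⟩ := hx i s hs
    have hother (j : ι) (hj : j ≠ i) : Λ j *ᵥ x = 0 := by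
      ext a
      refine Finset.sum_eq_zero fun b _ => ?_
      by_contra h
      exact hdisj hj (hΛ j a b (left_ne_zero_of_mul h)).2 ((hsupp b).1 (right_ne_zero_of_mul h))
    refine ⟨x, hsupp, ?_⟩
    rwa [Matrix.sum_mulVec, Finset.sum_eq_single i (fun j _ hj => hother j hj) (by simp)]

lemma exists_adjugate_one_sub_ne_zero_iff [Finite ι] [Infinite K] (r : V → V → Prop)
    {l : ι → List V} (hl : ∀ i, l i ≠ []) (hc : ∀ i, (l i).IsChain r)
    (hdisj : Pairwise (Function.onFun List.Disjoint l)) :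
    ∃ Λ : Matrix V V K, (∀ a b, Λ a b ≠ 0 → r a b) ∧
      ∀ i a, (1 - Λ).adjugate a ((l i).getLast (hl i)) ≠ 0 ↔ a ∈ l i := by
  obtain ⟨Λ, hΛ, hx⟩ := exists_edge_matrix_of_disjoint_walks (K := K) r hl hc hdisj
  obtain ⟨s, hdet, hs⟩ := ((eventually_cofinite_det_one_sub_smul_ne_zero Λ).and
    (eventually_cofinite_ne 0)).exists
  refine ⟨s • Λ, fun a b hab => hΛ a b (right_ne_zero_of_mul hab), fun i a => ?_⟩
  obtain ⟨x, hsupp, hfix⟩ := hx s hs i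
  have hsolve : (1 - s • Λ) *ᵥ x = Pi.single ((l i).getLast (hl i)) 1 := by
    rw [Matrix.sub_mulVec, Matrix.one_mulVec, Matrix.smul_mulVec]
    exact sub_eq_of_eq_add hfix
  have hcol : (1 - s • Λ).adjugate.col ((l i).getLast (hl i)) = (1 - s • Λ).det • x := by
    rw [← Matrix.mulVec_single_one, ← hsolve, Matrix.mulVec_mulVec, Matrix.adjugate_mul,
      Matrix.smul_mulVec, Matrix.one_mulVec]
  rw [← hsupp a, ← Matrix.col_apply (1 - s • Λ).adjugate, hcol, Pi.smul_apply, smul_eq_mul,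
    mul_ne_zero_iff_left hdet]

end DisjointWalks

namespace MixedGraph

section ClearedMatrices

variable {ι V R : Type*} [Fintype V] [DecidableEq V] [CommRing R]

/-- The matrix `A` of the theorem, for an arbitrary set `T` in place of `htr v` and an
arbitrary index type for the rows and columns. -/
noncomputable def mixedCovMatrix (T : Set V) (y p : ι → V) (Λ Ω : Matrix V V R) :
    Matrix ι ι R :=
  Matrix.of fun i j =>
    if y i ∈ T then ((1 - Λ)ᵀ * phi Λ Ω : Matrix V V R) (y i) (p j) else phi Λ Ω (y i) (p j)

/-- The left factor of `mixedCovMatrix` multiplied by `det (1 - Λ)`, so that its entries are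
polynomial in `Λ`. -/
noncomputable def sourceMatrix (T : Set V) (y : ι → V) (Λ : Matrix V V R) : Matrix ι V R :=
  Matrix.of fun i =>
    if y i ∈ T then ((1 - Λ).det • (1 : Matrix V V R)) (y i) else (1 - Λ).adjugateᵀ (y i)

/-- The right factor of `mixedCovMatrix` multiplied by `det (1 - Λ)`, so that its entries are
polynomial in `Λ`. -/
def targetMatrix (p : ι → V) (Λ : Matrix V V R) : Matrix V ι R :=
  (1 - Λ).adjugate.submatrix id p

lemma sourceMatrix_map {S : Type*} [CommRing S] (T : Set V) (y : ι → V) (f : R →+* S)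
    (Λ : Matrix V V R) : sourceMatrix T y (Λ.map f) = (sourceMatrix T y Λ).map f := by
  ext i a
  by_cases hi : y i ∈ T
  · simp [sourceMatrix, hi, map_det_one_sub, Matrix.one_apply, apply_ite f]
  · simp [sourceMatrix, hi, map_adjugate_one_sub]

lemma targetMatrix_map {S : Type*} [CommRing S] (p : ι → V) (f : R →+* S)
    (Λ : Matrix V V R) : targetMatrix p (Λ.map f) = (targetMatrix p Λ).map f := by
  rw [targetMatrix, map_adjugate_one_sub, Matrix.submatrix_map, targetMatrix]

lemma transpose_one_sub_mul_phi {Λ : Matrix V V R} (hΛ : IsUnit (1 - Λ).det)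
    (Ω : Matrix V V R) : (1 - Λ)ᵀ * phi Λ Ω = Ω * (1 - Λ)⁻¹ := by
  rw [phi, Matrix.mul_assoc, ← Matrix.mul_assoc, ← Matrix.transpose_mul,
    Matrix.nonsing_inv_mul _ hΛ, Matrix.transpose_one, Matrix.one_mul]

lemma sourceMatrix_mul_mul_targetMatrix (T : Set V) (y p : ι → V) {Λ : Matrix V V R}
    (hΛ : IsUnit (1 - Λ).det) (Ω : Matrix V V R) :
    sourceMatrix T y Λ * Ω * targetMatrix p Λ =
      (1 - Λ).det ^ 2 • mixedCovMatrix T y p Λ Ω := by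
  set d := (1 - Λ).det with hd
  have hadj : (1 - Λ).adjugate = d • (1 - Λ)⁻¹ := adjugate_eq_det_smul_inv hΛ
  ext i j
  by_cases hi : y i ∈ T
  · calc (sourceMatrix T y Λ * Ω * targetMatrix p Λ) i j
        = ((d • 1) * Ω * (1 - Λ).adjugate) (y i) (p j) := by
          simp only [Matrix.mul_apply, sourceMatrix, targetMatrix, Matrix.of_apply, if_pos hi,
            Matrix.submatrix_apply, id, ← hd]
      _ = _ := by
          rw [Matrix.smul_apply, mixedCovMatrix, Matrix.of_apply, if_pos hi,
            transpose_one_sub_mul_phi hΛ, hadj]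
          simp [pow_two, mul_assoc]
  · calc (sourceMatrix T y Λ * Ω * targetMatrix p Λ) i j
        = ((1 - Λ).adjugateᵀ * Ω * (1 - Λ).adjugate) (y i) (p j) := by
          simp only [Matrix.mul_apply, sourceMatrix, targetMatrix, Matrix.of_apply, if_neg hi,
            Matrix.submatrix_apply, id]
      _ = _ := by
          rw [Matrix.smul_apply, mixedCovMatrix, Matrix.of_apply, if_neg hi, phi, hadj]
          simp [pow_two, mul_assoc]

end ClearedMatrices

lemma exists_polynomial_evalParam_eq_det {ι V : Type*} [Fintype ι] [DecidableEq ι] [Fintype V]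
    [DecidableEq V] (T : Set V) (y p : ι → V) :
    ∃ P : MvPolynomial ((V × V) ⊕ (V × V)) ℝ, ∀ θ, evalParam θ P =
      (sourceMatrix T y θ.1 * θ.2 * targetMatrix p θ.1).det := by
  let Λ : Matrix V V (MvPolynomial ((V × V) ⊕ (V × V)) ℝ) :=
    Matrix.of fun a b => MvPolynomial.X (Sum.inl (a, b))
  let Ω : Matrix V V (MvPolynomial ((V × V) ⊕ (V × V)) ℝ) :=
    Matrix.of fun a b => MvPolynomial.X (Sum.inr (a, b))
  refine ⟨(sourceMatrix T y Λ * Ω * targetMatrix p Λ).det, fun θ => ?_⟩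
  let ev : MvPolynomial ((V × V) ⊕ (V × V)) ℝ →+* ℝ :=
    MvPolynomial.eval (Sum.elim (fun e => θ.1 e.1 e.2) (fun e => θ.2 e.1 e.2))
  have hΛ : Λ.map ev = θ.1 := by ext a b; simp [Λ, ev]
  have hΩ : Ω.map ev = θ.2 := by ext a b; simp [Ω, ev]
  calc evalParam θ (sourceMatrix T y Λ * Ω * targetMatrix p Λ).det
      = ((sourceMatrix T y Λ * Ω * targetMatrix p Λ).map ev).det := ev.map_det _
    _ = (sourceMatrix T y θ.1 * θ.2 * targetMatrix p θ.1).det := by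
      rw [Matrix.map_mul, Matrix.map_mul, ← sourceMatrix_map, ← targetMatrix_map, hΛ, hΩ]

lemma mem_closure_PDB_of_posSemidef {V : Type*} [Fintype V] [DecidableEq V] (G : MixedGraph V)
    {Ω : Matrix V V ℝ} (hΩ : Ω.PosSemidef)
    (hB : ∀ v w, v ≠ w → (v, w) ∉ G.B → Ω v w = 0) : Ω ∈ closure G.PDB := by
  have htendsto : Filter.Tendsto (fun ε : ℝ => Ω + ε • (1 : Matrix V V ℝ))
      (nhdsWithin 0 (Set.Ioi 0)) (nhds Ω) := by
    refine Filter.Tendsto.mono_left ?_ nhdsWithin_le_nhds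
    have hcont : Continuous fun ε : ℝ => Ω + ε • (1 : Matrix V V ℝ) := by fun_prop
    simpa using hcont.tendsto 0
  refine mem_closure_of_tendsto htendsto ?_
  filter_upwards [self_mem_nhdsWithin] with ε hε
  refine ⟨(Matrix.PosDef.one.smul hε).posSemidef_add hΩ, fun v w hvw hB' => ?_⟩
  simp [hB v w hvw hB', hvw]

section Segment

variable {ι V R : Type*} [DecidableEq V] [CommRing R]

/-- The matrix whose `i`-th column moves along the segment from the unit vector at `y i`
(at `s = 0`) to the unit vector at `h i` (at `s = 1`). -/
def segmentMatrix (y h : ι → V) (s : R) : Matrix V ι R :=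
  Matrix.of fun a i => (Pi.single (y i) (1 - s) + Pi.single (h i) s : V → R) a

lemma segmentMatrix_map {S : Type*} [CommRing S] (y h : ι → V) (f : R →+* S) (s : R) :
    segmentMatrix y h (f s) = (segmentMatrix y h s).map f := by
  ext a i
  simp [segmentMatrix, Pi.single_apply, apply_ite f]

variable [Fintype V]

lemma segmentMatrix_mul_transpose_apply_eq_zero [Fintype ι] (G : MixedGraph V) {y h : ι → V}
    (hyh : ∀ i, y i = h i ∨ (y i, h i) ∈ G.B) (s : R) {a b : V} (hab : a ≠ b)
    (hB : (a, b) ∉ G.B) : (segmentMatrix y h s * (segmentMatrix y h s)ᵀ) a b = 0 := by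
  refine Finset.sum_eq_zero fun i _ => ?_
  by_contra hne
  have hmem {c : V} (hc : segmentMatrix y h s c i ≠ 0) : c = y i ∨ c = h i := by
    contrapose! hc
    simp [segmentMatrix, hc.1, hc.2]
  rcases hmem (left_ne_zero_of_mul hne) with rfl | rfl <;>
    rcases hmem (right_ne_zero_of_mul hne) with rfl | rfl
  · exact hab rfl
  · exact (hyh i).elim hab hB
  · exact (hyh i).elim (fun e => hab e.symm) fun e => hB (G.B_symm _ _ e)
  · exact hab rfl

lemma mul_segmentMatrix_zero {κ : Type*} (y h : ι → V) (M : Matrix κ V R) :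
    M * segmentMatrix y h (0 : R) = M.submatrix id y := by
  ext k i
  simp [Matrix.mul_apply, segmentMatrix, Pi.single_apply]

lemma segmentMatrix_one_transpose_mul {κ : Type*} (y h : ι → V) (M : Matrix V κ R) :
    (segmentMatrix y h (1 : R))ᵀ * M = M.submatrix h id := by
  ext i k
  simp [Matrix.mul_apply, segmentMatrix, Pi.single_apply]

lemma sourceMatrix_zero_mul_segmentMatrix_zero [DecidableEq ι] (T : Set V) {y : ι → V}
    (hy : Function.Injective y) (h : ι → V) :
    sourceMatrix T y (0 : Matrix V V R) * segmentMatrix y h (0 : R) = 1 := by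
  rw [mul_segmentMatrix_zero]
  ext i j
  simp [sourceMatrix, Matrix.one_apply, hy.eq_iff]

variable [Fintype ι] [DecidableEq ι]

open Filter Polynomial in
lemma exists_segment_det_ne_zero [IsDomain R] [Infinite R] (T : Set V) {y : ι → V}
    (hy : Function.Injective y) (h p : ι → V) (Λ : Matrix V V R)
    (hΛ : ((segmentMatrix y h (1 : R))ᵀ * targetMatrix p Λ).det ≠ 0) :
    ∃ s : R, (1 - s • Λ).det ≠ 0 ∧
      (sourceMatrix T y (s • Λ) * segmentMatrix y h s).det ≠ 0 ∧
      ((segmentMatrix y h s)ᵀ * targetMatrix p (s • Λ)).det ≠ 0 := by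
  let N : Matrix V V R[X] := (X : R[X]) • Λ.map C
  let W : Matrix V ι R[X] := segmentMatrix y h X
  have hN (s : R) : N.map (evalRingHom s) = s • Λ := map_evalRingHom_X_smul_map_C Λ s
  have hW (s : R) : W.map (evalRingHom s) = segmentMatrix y h s := by
    rw [← segmentMatrix_map, coe_evalRingHom, eval_X]
  have hsource (s : R) : (sourceMatrix T y N * W).map (evalRingHom s) =
      sourceMatrix T y (s • Λ) * segmentMatrix y h s := by
    rw [Matrix.map_mul, ← sourceMatrix_map, hN, hW]
  have htarget (s : R) : (Wᵀ * targetMatrix p N).map (evalRingHom s) =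
      (segmentMatrix y h s)ᵀ * targetMatrix p (s • Λ) := by
    rw [Matrix.map_mul, Matrix.transpose_map, ← targetMatrix_map, hN, hW]
  have hsource_gen := eventually_cofinite_det_map_ne_zero (sourceMatrix T y N * W) (s := 0)
    (by rw [hsource, zero_smul, sourceMatrix_zero_mul_segmentMatrix_zero T hy]; simp)
  have htarget_gen := eventually_cofinite_det_map_ne_zero (Wᵀ * targetMatrix p N) (s := 1)
    (by rwa [htarget, one_smul])
  simp only [hsource] at hsource_gen
  simp only [htarget] at htarget_gen
  exact ((eventually_cofinite_det_one_sub_smul_ne_zero Λ).and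
    (hsource_gen.and htarget_gen)).exists

end Segment

lemma exists_mem_Theta_det_ne_zero {ι V : Type*} [Fintype ι] [DecidableEq ι] [Fintype V]
    [DecidableEq V] (G : MixedGraph V) (T : Set V) {y h p : ι → V} (hy : Function.Injective y)
    (hyh : ∀ i, y i = h i ∨ (y i, h i) ∈ G.B) {Λ : Matrix V V ℝ}
    (hD : ∀ a b, Λ a b ≠ 0 → (a, b) ∈ G.D)
    (hΛ : ((segmentMatrix y h (1 : ℝ))ᵀ * targetMatrix p Λ).det ≠ 0) :
    ∃ θ ∈ G.Theta, (sourceMatrix T y θ.1 * θ.2 * targetMatrix p θ.1).det ≠ 0 := by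
  obtain ⟨s, hdet, hsource, htarget⟩ := exists_segment_det_ne_zero T hy h p Λ hΛ
  set S := sourceMatrix T y (s • Λ)
  set W := segmentMatrix y h s
  set R := targetMatrix p (s • Λ)
  have hΩ : W * Wᵀ ∈ closure G.PDB := G.mem_closure_PDB_of_posSemidef
    (Matrix.posSemidef_self_mul_conjTranspose W)
    fun a b hab hB => G.segmentMatrix_mul_transpose_apply_eq_zero hyh s hab hB
  have hne : (S * (W * Wᵀ) * R).det ≠ 0 := by
    rw [← Matrix.mul_assoc, Matrix.mul_assoc, Matrix.det_mul]
    exact mul_ne_zero hsource htarget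
  have hopen : IsOpen {Ω : Matrix V V ℝ | (S * Ω * R).det ≠ 0} :=
    isOpen_ne_fun (by fun_prop) (by fun_prop)
  obtain ⟨Ω, hΩ_ne, hΩ_mem⟩ := mem_closure_iff.1 hΩ _ hopen hne
  refine ⟨(s • Λ, Ω), ⟨⟨fun a b hab => ?_, hdet.isUnit⟩, hΩ_mem⟩, hΩ_ne⟩
  change s • Λ a b = 0
  rw [not_not.1 (mt (hD a b) hab), smul_zero]

section Treks

variable {V : Type*} [Fintype V] [DecidableEq V] {G : MixedGraph V}

lemma Trek.IsHalfTrek.source_eq_head_or_mem_B {π : G.Trek} (hπ : π.IsHalfTrek) :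
    π.source = π.right.head π.right_ne ∨ (π.source, π.right.head π.right_ne) ∈ G.B := by
  have hsource : π.left.head π.left_ne = π.source :=
    Finset.card_le_one.1 hπ.le _ (List.mem_toFinset.2 (List.head_mem _)) _
      (List.mem_toFinset.2 (List.getLast_mem _))
  have hhead := π.head_cond
  rw [hsource] at hhead
  split_ifs at hhead
  · exact Or.inr hhead
  · exact Or.inl hhead

lemma NoSidedIntersection.pairwise_disjoint_right {ι : Type*} [Fintype ι] {y : ι → V}
    (hy : Function.Injective y) {f : V → G.Trek}
    (hf : G.NoSidedIntersection (Finset.univ.image y) f) :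
    Pairwise (Function.onFun List.Disjoint fun i => (f (y i)).right) := by
  intro i j hij a hi hj
  have hdisj := (hf (y i) (by simp) (y j) (by simp) (hy.ne hij)).2
  exact Finset.disjoint_left.1 hdisj (List.mem_toFinset.2 hi) (List.mem_toFinset.2 hj)

lemma IsTrekSystem.exists_perm_target {ι : Type*} [Fintype ι] {y p : ι → V}
    (hy : Function.Injective y) {f : V → G.Trek}
    (hf : G.IsTrekSystem (Finset.univ.image y) (Finset.univ.image p) f) :
    ∃ e : Equiv.Perm ι, ∀ i, p (e i) = (f (y i)).target := by
  obtain ⟨-, htarget, hne⟩ := hf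
  refine exists_perm_of_image_eq (fun i j hij => ?_) (by rw [← htarget, Finset.image_image]; rfl)
  by_contra h
  exact hne (y i) (by simp) (y j) (by simp) (hy.ne h) hij

lemma exists_targetMatrix_det_ne_zero {ι K : Type*} [Fintype ι] [DecidableEq ι] [Field K]
    [Infinite K] {y p : ι → V} (hy : Function.Injective y) {f : V → G.Trek}
    (hsys : G.IsTrekSystem (Finset.univ.image y) (Finset.univ.image p) f)
    (hns : G.NoSidedIntersection (Finset.univ.image y) f) :
    ∃ Λ : Matrix V V K, (∀ a b, Λ a b ≠ 0 → (a, b) ∈ G.D) ∧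
      ((targetMatrix p Λ).submatrix (fun i => (f (y i)).right.head (f (y i)).right_ne) id).det
        ≠ 0 := by
  have hdisj := hns.pairwise_disjoint_right hy
  obtain ⟨Λ, hD, hΛ⟩ := exists_adjugate_one_sub_ne_zero_iff (K := K) (fun a b => (a, b) ∈ G.D)
    (fun i => (f (y i)).right_ne) (fun i => (f (y i)).right_chain) hdisj
  obtain ⟨e, he⟩ := hsys.exists_perm_target hy
  refine ⟨Λ, hD, det_ne_zero_of_perm e fun i j => ?_⟩
  have hhead := List.head_mem (f (y i)).right_ne
  rw [Matrix.submatrix_apply, targetMatrix, Matrix.submatrix_apply, id, id, he]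
  exact (hΛ j _).trans ⟨fun h => by_contra fun hij => hdisj hij hhead h, fun h => h ▸ hhead⟩

end Treks

end MixedGraph

theorem htc_matrix_generically_invertible_general {ι V : Type*} [Fintype ι] [DecidableEq ι]
    [Fintype V] [DecidableEq V] (G : MixedGraph V) (T : Set V) {y p : ι → V}
    (hy : Function.Injective y) {f : V → G.Trek}
    (hhalf : ∀ z ∈ Finset.univ.image y, (f z).IsHalfTrek)
    (hsys : G.IsTrekSystem (Finset.univ.image y) (Finset.univ.image p) f)
    (hns : G.NoSidedIntersection (Finset.univ.image y) f) :
    ∃ V₀, G.IsProperAlgebraic V₀ ∧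
      ∀ θ ∈ G.Theta \ V₀, (MixedGraph.mixedCovMatrix T y p θ.1 θ.2).det ≠ 0 := by
  obtain ⟨Λ, hD, hΛ⟩ := MixedGraph.exists_targetMatrix_det_ne_zero (K := ℝ) hy hsys hns
  rw [← MixedGraph.segmentMatrix_one_transpose_mul y] at hΛ
  have hyh (i : ι) := (hhalf (y i) (by simp)).source_eq_head_or_mem_B
  simp only [hsys.1 _ (Finset.mem_image_of_mem y (Finset.mem_univ _))] at hyh
  obtain ⟨P, hP⟩ := MixedGraph.exists_polynomial_evalParam_eq_det T y p
  refine ⟨{θ ∈ G.Theta | MixedGraph.evalParam θ P = 0}, ⟨P, ?_, rfl⟩, ?_⟩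
  · simpa only [hP] using G.exists_mem_Theta_det_ne_zero T hy hyh hD hΛ
  · rintro θ ⟨hθ, hθP⟩ hdet
    refine hθP ⟨hθ, ?_⟩
    rw [hP, MixedGraph.sourceMatrix_mul_mul_targetMatrix T y p hθ.1.2, Matrix.det_smul, hdet,
      mul_zero]

/-- Lemma 1: if `Y = {y 1, …, y n}` (disjoint from `{v} ∪ sib(v)`) satisfies the half-trek
criterion with respect to `v`, where `pa(v) = {p 1, …, p n}`, then the matrix `A` with
`A i j = [(I-Λ)ᵀ Σ]_{y i, p j}` when `y i ∈ htr(v)` and `A i j = Σ_{y i, p j}` otherwise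
is generically invertible. -/
theorem htc_matrix_generically_invertible {V : Type*} [Fintype V] [DecidableEq V]
    (G : MixedGraph V) (v : V) (n : ℕ) (y p : Fin n → V)
    (hy : Function.Injective y) (hp : Function.Injective p)
    (hpa : Finset.univ.image p = G.pa v)
    (hYv : ∀ i, y i ≠ v ∧ y i ∉ G.sib v)
    (hHTC : G.SatisfiesHTC v (Finset.univ.image y)) :
    ∃ V₀, G.IsProperAlgebraic V₀ ∧
      ∀ θ ∈ G.Theta \ V₀,
        (Matrix.of fun i j : Fin n =>
          if y i ∈ G.htr v then
            (((1 - θ.1)ᵀ * MixedGraph.phi θ.1 θ.2 : Matrix V V ℝ)) (y i) (p j)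
          else
            MixedGraph.phi θ.1 θ.2 (y i) (p j)).det ≠ 0 := by
  obtain ⟨-, -, f, hhalf, hsys, hns⟩ := hHTC
  exact htc_matrix_generically_invertible_general G (G.htr v) hy hhalf (hpa ▸ hsys) hns
end
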